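/- arXiv:1406.7545 — 2 statements merged into one kernel-verified Lean document; each statement's English description precedes it below -/
import Mathlib

section
/- Let N ≥ 2 and δ₀ ∈ (0,1). There exists m̄₀ > 0, depending only on N and δ₀, such that for all s, t with 0 < s < t < 1 and t − s ≥ δ₀ and every m ∈ (0, m̄₀), the minimum problem min{ F_{s,t}(E) : E ⊆ ℝ^N measurable, |E| = m, P_t(E) < ∞ } admits a minimizer; that is, there exists a measurable F ⊆ ℝ^N with |F| = m, P_t(F) < ∞, and F_{s,t}(F) ≤ F_{s,t}(E) for every measurable E ⊆ ℝ^N with |E| = m and P_t(E) < ∞. -/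
open MeasureTheory ENNReal

/-- Interaction energy `∫_A ∫_B |x-y|^{-(N+α)} dy dx` in `[0,∞]`. -/
noncomputable def interEnergy (N : ℕ) (α : ℝ)
    (A B : Set (EuclideanSpace ℝ (Fin N))) : ℝ≥0∞ :=
  ∫⁻ x in A, ∫⁻ y in B, ENNReal.ofReal (‖x - y‖ ^ (-((N : ℝ) + α))) ∂volume ∂volume

/-- The fractional `α`-perimeter `P_α(E) = ∫_E ∫_{Eᶜ} |x-y|^{-(N+α)} dy dx`. -/
noncomputable def fracPer (N : ℕ) (α : ℝ) (E : Set (EuclideanSpace ℝ (Fin N))) : ℝ≥0∞ :=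
  interEnergy N α E Eᶜ

/-- The free energy `F_{s,t}(E) = (1-t) P_t(E) - s P_s(E)`. -/
noncomputable def freeEnergy (N : ℕ) (s t : ℝ) (E : Set (EuclideanSpace ℝ (Fin N))) : ℝ :=
  (1 - t) * (fracPer N t E).toReal - s * (fracPer N s E).toReal

/-- `F` is a minimizer of the free energy `F_{s,t}` among measurable sets of volume `m`
with finite `t`-perimeter. -/
def IsMinimizer (N : ℕ) (s t m : ℝ) (F : Set (EuclideanSpace ℝ (Fin N))) : Prop :=
  MeasurableSet F ∧ volume F = ENNReal.ofReal m ∧ fracPer N t F < ⊤ ∧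
    ∀ E : Set (EuclideanSpace ℝ (Fin N)), MeasurableSet E →
      volume E = ENNReal.ofReal m → fracPer N t E < ⊤ →
      freeEnergy N s t F ≤ freeEnergy N s t E


section partP1
open MeasureTheory ENNReal

abbrev Sp (N : ℕ) := EuclideanSpace ℝ (Fin N)

noncomputable def IE {N : ℕ} (k : Sp N → ℝ≥0∞) (A B : Set (Sp N)) : ℝ≥0∞ :=
  ∫⁻ x in A, ∫⁻ y in B, k (x - y)

noncomputable def KK (N : ℕ) (α : ℝ) : Sp N → ℝ≥0∞ :=
  fun z => ENNReal.ofReal (‖z‖ ^ (-((N : ℝ) + α)))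

section basic
variable {N : ℕ}

lemma fracPer_eq (α : ℝ) (E : Set (Sp N)) : fracPer N α E = IE (KK N α) E Eᶜ := rfl

@[fun_prop]
lemma KK_meas (α : ℝ) : Measurable (KK N α) := by
  unfold KK; fun_prop

lemma KK_even (α : ℝ) (z : Sp N) : KK N α (-z) = KK N α z := by simp [KK]

lemma IE_inner_meas {k : Sp N → ℝ≥0∞} (hk : Measurable k) (B : Set (Sp N)) :
    Measurable fun x : Sp N => ∫⁻ y in B, k (x - y) := by
  apply Measurable.lintegral_prod_right' (f := fun p : Sp N × Sp N => k (p.1 - p.2))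
  fun_prop

lemma IE_mono {k k' : Sp N → ℝ≥0∞} (h : ∀ z, k z ≤ k' z) {A A' B B' : Set (Sp N)}
    (hA : A ⊆ A') (hB : B ⊆ B') : IE k A B ≤ IE k' A' B' := by
  unfold IE
  refine lintegral_mono' (Measure.restrict_mono hA le_rfl) fun x => ?_
  exact lintegral_mono' (Measure.restrict_mono hB le_rfl) fun y => h _

lemma IE_add {k k' : Sp N → ℝ≥0∞} (hk : Measurable k) (A B : Set (Sp N)) :
    IE (fun z => k z + k' z) A B = IE k A B + IE k' A B := by
  unfold IE
  rw [← lintegral_add_left (IE_inner_meas hk B)]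
  congr 1; ext x
  rw [lintegral_add_left (by fun_prop)]

lemma IE_const_mul {k : Sp N → ℝ≥0∞} (hk : Measurable k) (c : ℝ≥0∞) (A B : Set (Sp N)) :
    IE (fun z => c * k z) A B = c * IE k A B := by
  unfold IE
  rw [← lintegral_const_mul c (IE_inner_meas hk B)]
  congr 1; ext x
  rw [lintegral_const_mul _ (by fun_prop)]

lemma IE_union_left (k : Sp N → ℝ≥0∞) {A A' : Set (Sp N)} (hA' : MeasurableSet A')
    (hd : Disjoint A A') (B : Set (Sp N)) : IE k (A ∪ A') B = IE k A B + IE k A' B := by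
  unfold IE
  rw [lintegral_union hA' hd]

lemma IE_union_right {k : Sp N → ℝ≥0∞} (hk : Measurable k) (A : Set (Sp N)) {B B' : Set (Sp N)}
    (hB' : MeasurableSet B') (hd : Disjoint B B') : IE k A (B ∪ B') = IE k A B + IE k A B' := by
  unfold IE
  rw [← lintegral_add_left (IE_inner_meas hk B)]
  congr 1; ext x
  rw [lintegral_union hB' hd]

lemma IE_comm {k : Sp N → ℝ≥0∞} (hk : Measurable k) (he : ∀ z, k (-z) = k z)
    (A B : Set (Sp N)) : IE k A B = IE k B A := by
  unfold IE
  rw [lintegral_lintegral_swap (by fun_prop)]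
  congr 1; ext y; congr 1; ext x
  rw [← he, neg_sub]

lemma lintegral_sub_left (k : Sp N → ℝ≥0∞) (x : Sp N) : ∫⁻ y, k (x - y) = ∫⁻ z, k z :=
  lintegral_sub_left_eq_self k x

lemma IE_univ (k : Sp N → ℝ≥0∞) (A : Set (Sp N)) :
    IE k A Set.univ = (∫⁻ z, k z) * volume A := by
  unfold IE
  simp [lintegral_sub_left_eq_self]

lemma IE_le (k : Sp N → ℝ≥0∞) (A B : Set (Sp N)) :
    IE k A B ≤ (∫⁻ z, k z) * volume A := by
  rw [← IE_univ]; exact IE_mono (fun _ => le_rfl) le_rfl (Set.subset_univ _)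

lemma IE_translate {k : Sp N → ℝ≥0∞} (hk : Measurable k) {A B : Set (Sp N)}
    (hA : MeasurableSet A) (hB : MeasurableSet B) (v : Sp N) :
    IE k ((· + v) ⁻¹' A) ((· + v) ⁻¹' B) = IE k A B := by
  unfold IE
  have hmp := measurePreserving_add_right (volume : Measure (Sp N)) v
  rw [← hmp.setLIntegral_comp_preimage hA (IE_inner_meas hk B)]
  congr 1; ext x
  rw [← hmp.setLIntegral_comp_preimage hB (by fun_prop)]
  simp

/-- scaling -/
lemma lintegral_smul {r : ℝ} (hr : 0 < r) {f : Sp N → ℝ≥0∞} :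
    ∫⁻ x, f x = ENNReal.ofReal (r ^ N) * ∫⁻ x, f (r • x) := by
  have h := Measure.map_addHaar_smul (volume : Measure (Sp N)) hr.ne'
  let e : Sp N ≃ᵐ Sp N := (Homeomorph.smul (Units.mk0 r hr.ne')).toMeasurableEquiv
  have h2 : ∫⁻ x, f x ∂(Measure.map (r • ·) (volume : Measure (Sp N))) = ∫⁻ x, f (r • x) :=
    lintegral_map_equiv f e
  rw [← h2, h, lintegral_smul_measure]
  have hp : 0 < r ^ N := by positivity
  rw [finrank_euclideanSpace_fin, abs_of_pos (inv_pos.2 hp), smul_eq_mul, ← mul_assoc,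
    ← ENNReal.ofReal_mul hp.le, mul_inv_cancel₀ hp.ne']
  simp

lemma IE_eq_indicator (k : Sp N → ℝ≥0∞) {A B : Set (Sp N)}
    (hA : MeasurableSet A) (hB : MeasurableSet B) :
    IE k A B = ∫⁻ x, A.indicator (fun x => ∫⁻ y, B.indicator (fun y => k (x - y)) y) x := by
  unfold IE
  rw [lintegral_indicator hA]
  congr 1; ext x
  rw [lintegral_indicator hB]

lemma IE_scale {k : Sp N → ℝ≥0∞} {A B : Set (Sp N)}
    (hA : MeasurableSet A) (hB : MeasurableSet B) {r : ℝ} (hr : 0 < r) :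
    IE k ((r • ·) ⁻¹' A) ((r • ·) ⁻¹' B) * ENNReal.ofReal (r ^ N) * ENNReal.ofReal (r ^ N)
      = IE (fun z => k (r⁻¹ • z)) A B := by
  have hm : Measurable fun x : Sp N => r • x := by fun_prop
  rw [IE_eq_indicator _ (hm hA) (hm hB), IE_eq_indicator _ hA hB]
  rw [lintegral_smul hr (f := fun x => A.indicator (fun x => ∫⁻ y, B.indicator
    (fun y => k (r⁻¹ • (x - y))) y) x), mul_comm, mul_comm _ (ENNReal.ofReal (r ^ N))]
  congr 1
  rw [← lintegral_const_mul' _ _ ENNReal.ofReal_ne_top]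
  congr 1; ext x
  by_cases hx : r • x ∈ A
  · rw [Set.indicator_of_mem (by exact hx), Set.indicator_of_mem hx,
      lintegral_smul hr (f := fun y => B.indicator (fun y => k (r⁻¹ • (r • x - y))) y)]
    refine congrArg _ (lintegral_congr fun y => ?_)
    have : r⁻¹ • (r • x - r • y) = x - y := by
      rw [← smul_sub, inv_smul_smul₀ hr.ne']
    by_cases hy : r • y ∈ B
    · rw [Set.indicator_of_mem (by exact hy), Set.indicator_of_mem hy, this]
    · rw [Set.indicator_of_notMem (by exact hy), Set.indicator_of_notMem hy]
  · rw [Set.indicator_of_notMem (by exact hx), Set.indicator_of_notMem hx, mul_zero]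

lemma KK_smul (α : ℝ) {r : ℝ} (hr : 0 < r) (z : Sp N) :
    KK N α (r • z) = ENNReal.ofReal (r ^ (-((N : ℝ) + α))) * KK N α z := by
  unfold KK
  rw [← ENNReal.ofReal_mul (by positivity), norm_smul, Real.norm_of_nonneg hr.le,
    Real.mul_rpow hr.le (norm_nonneg _)]

lemma fracPer_scale (α : ℝ) {E : Set (Sp N)} (hE : MeasurableSet E) {r : ℝ} (hr : 0 < r) :
    fracPer N α ((r⁻¹ • ·) ⁻¹' E) = ENNReal.ofReal (r ^ ((N : ℝ) - α)) * fracPer N α E := by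
  have h := IE_scale (k := KK N α) hE hE.compl (inv_pos.2 hr)
  rw [fracPer_eq, fracPer_eq, ← Set.preimage_compl]
  simp only [inv_inv] at h
  simp_rw [KK_smul α hr] at h
  rw [IE_const_mul (KK_meas α)] at h
  have hp : ENNReal.ofReal (r ^ N) * ENNReal.ofReal ((r⁻¹) ^ N) = 1 := by
    rw [← ENNReal.ofReal_mul (by positivity), ← mul_pow, mul_inv_cancel₀ hr.ne']; simp
  calc IE (KK N α) ((r⁻¹ • ·) ⁻¹' E) ((r⁻¹ • ·) ⁻¹' Eᶜ)
      = IE (KK N α) ((r⁻¹ • ·) ⁻¹' E) ((r⁻¹ • ·) ⁻¹' Eᶜ)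
        * (ENNReal.ofReal (r ^ N) * ENNReal.ofReal ((r⁻¹) ^ N))
        * (ENNReal.ofReal (r ^ N) * ENNReal.ofReal ((r⁻¹) ^ N)) := by rw [hp]; simp
    _ = ENNReal.ofReal (r ^ N) * ENNReal.ofReal (r ^ N) *
        (IE (KK N α) ((r⁻¹ • ·) ⁻¹' E) ((r⁻¹ • ·) ⁻¹' Eᶜ) * ENNReal.ofReal ((r⁻¹) ^ N)
          * ENNReal.ofReal ((r⁻¹) ^ N)) := by ring
    _ = _ := by
      rw [h, ← mul_assoc]
      congr 1
      rw [← ENNReal.ofReal_mul (by positivity), ← ENNReal.ofReal_mul (by positivity)]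
      congr 1
      rw [← Real.rpow_natCast, ← Real.rpow_add hr, ← Real.rpow_add hr]
      congr 1; ring

lemma vol_scale {E : Set (Sp N)} {r : ℝ} (hr : 0 < r) :
    volume ((r⁻¹ • ·) ⁻¹' E : Set (Sp N)) = ENNReal.ofReal (r ^ N) * volume E := by
  rw [Measure.addHaar_preimage_smul _ (inv_ne_zero hr.ne')]
  congr 2
  rw [finrank_euclideanSpace_fin, inv_pow, inv_inv, abs_of_pos (by positivity)]

/-- overlap function -/
noncomputable def hE (E : Set (Sp N)) (z : Sp N) : ℝ≥0∞ :=
  volume (E ∩ (fun x => x - z) ⁻¹' Eᶜ)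

lemma hE_meas {E : Set (Sp N)} (hm : MeasurableSet E) : Measurable (hE E) := by
  unfold hE
  have : MeasurableSet {p : Sp N × Sp N | p.2 ∈ E ∧ p.2 - p.1 ∈ Eᶜ} := by
    apply MeasurableSet.inter
    · exact measurable_snd hm
    · exact (measurable_snd.sub measurable_fst) hm.compl
  exact measurable_measure_prodMk_left this

lemma IE_eq_hE {k : Sp N → ℝ≥0∞} (hk : Measurable k) {E : Set (Sp N)} (hm : MeasurableSet E) :
    IE k E Eᶜ = ∫⁻ z, k z * hE E z := by
  rw [IE_eq_indicator _ hm hm.compl]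
  have h1 : ∀ x : Sp N, ∫⁻ y, Eᶜ.indicator (fun y => k (x - y)) y =
      ∫⁻ z, k z * Eᶜ.indicator 1 (x - z) := by
    intro x
    rw [← lintegral_sub_left_eq_self _ x]
    congr 1; ext z
    by_cases h : x - z ∈ Eᶜ
    · rw [Set.indicator_of_mem h, Set.indicator_of_mem h]; simp
    · rw [Set.indicator_of_notMem h, Set.indicator_of_notMem h]; simp
  have h2 : ∀ x, E.indicator (fun x => ∫⁻ y, Eᶜ.indicator (fun y => k (x - y)) y) x
      = ∫⁻ z, k z * (E ∩ (fun x => x - z) ⁻¹' Eᶜ).indicator 1 x := by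
    intro x
    by_cases h : x ∈ E
    · rw [Set.indicator_of_mem h, h1]
      congr 1; ext z
      congr 1
      by_cases h' : x - z ∈ Eᶜ
      · rw [Set.indicator_of_mem h', Set.indicator_of_mem
          (show x ∈ E ∩ (fun x => x - z) ⁻¹' Eᶜ from ⟨h, h'⟩)]; rfl
      · rw [Set.indicator_of_notMem h', Set.indicator_of_notMem (fun hh => h' hh.2)]
    · rw [Set.indicator_of_notMem h]
      simp [Set.indicator, h]
  simp_rw [h2]
  rw [lintegral_lintegral_swap]
  · congr 1; ext z
    have hms : MeasurableSet (E ∩ (fun x => x - z) ⁻¹' Eᶜ) :=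
      hm.inter ((measurable_id.sub_const z) hm.compl)
    rw [lintegral_const_mul _ (measurable_one.indicator hms), lintegral_indicator_one hms]
    rfl
  · apply Measurable.aemeasurable
    have : MeasurableSet {p : Sp N × Sp N | p.1 ∈ E ∧ p.1 - p.2 ∈ Eᶜ} := by
      apply MeasurableSet.inter
      · exact measurable_fst hm
      · exact (measurable_fst.sub measurable_snd) hm.compl
    exact (hk.comp measurable_snd).mul ((measurable_one (α := ℝ≥0∞)).indicator this)

lemma hE_two (E : Set (Sp N)) (z : Sp N) :
    hE E ((2:ℝ) • z) ≤ 2 * hE E z := by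
  unfold hE
  have hsub : (E ∩ (fun x => x - (2:ℝ) • z) ⁻¹' Eᶜ) ⊆
      (E ∩ (fun x => x - z) ⁻¹' Eᶜ) ∪ (fun x => x + (-z)) ⁻¹' (E ∩ (fun x => x - z) ⁻¹' Eᶜ) := by
    rintro x ⟨h1, h2⟩
    by_cases h : x - z ∈ E
    · right
      refine ⟨by simpa [sub_eq_add_neg] using h, ?_⟩
      simp only [Set.mem_preimage] at h2 ⊢
      convert h2 using 1
      rw [two_smul]; abel
    · left; exact ⟨h1, h⟩
  refine (measure_mono hsub).trans ((measure_union_le _ _).trans ?_)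
  rw [measure_preimage_add_right, two_mul]

/-- key comparison principle -/
lemma compare_lem {k v w : Sp N → ℝ≥0∞} (hk : Measurable k) (hv : Measurable v)
    (hw : Measurable w) {E : Set (Sp N)} (hm : MeasurableSet E)
    (hfin : IE k E Eᶜ ≠ ⊤)
    (h : ∀ z, ENNReal.ofReal (2 ^ N) * 2 * k ((2:ℝ) • z) + w z ≤ k z + v z) :
    IE w E Eᶜ ≤ IE v E Eᶜ := by
  have h1 : IE k E Eᶜ + IE w E Eᶜ ≤ IE k E Eᶜ + IE v E Eᶜ := by
    rw [← IE_add (k := k) (k' := v) hk, IE_eq_hE (k := fun z => k z + v z) (hk.add hv) hm]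
    calc IE k E Eᶜ + IE w E Eᶜ
        = ENNReal.ofReal (2 ^ N) * (∫⁻ z, k ((2:ℝ) • z) * hE E ((2:ℝ) • z))
          + ∫⁻ z, w z * hE E z := by
          rw [IE_eq_hE hk hm, IE_eq_hE hw hm, lintegral_smul (two_pos)]
      _ ≤ ∫⁻ z, (ENNReal.ofReal (2 ^ N) * 2 * k ((2:ℝ) • z) + w z) * hE E z := by
          simp_rw [add_mul]
          rw [lintegral_add_right (g := fun z => w z * hE E z) _ (hw.mul (hE_meas hm)),
            ← lintegral_const_mul' _ _ ENNReal.ofReal_ne_top]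
          gcongr ?_ + _
          refine lintegral_mono fun z => ?_
          calc ENNReal.ofReal (2 ^ N) * (k ((2:ℝ) • z) * hE E ((2:ℝ) • z))
              ≤ ENNReal.ofReal (2 ^ N) * (k ((2:ℝ) • z) * (2 * hE E z)) := by
                gcongr; exact hE_two E z
            _ = _ := by ring
      _ ≤ _ := by
          refine lintegral_mono fun z => ?_
          exact mul_le_mul_left (h z) _
  exact (ENNReal.add_le_add_iff_left hfin).1 h1

end basic

end partP1


section partP2
open MeasureTheory ENNReal

section radial
variable {N : ℕ}

noncomputable def nearK (N : ℕ) (α r : ℝ) : Sp N → ℝ≥0∞ :=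
  fun z => if ‖z‖ < r then KK N α z else 0
noncomputable def farK (N : ℕ) (α r : ℝ) : Sp N → ℝ≥0∞ :=
  fun z => if ‖z‖ < r then 0 else KK N α z

@[fun_prop]
lemma nearK_meas (α r : ℝ) : Measurable (nearK N α r) := by
  unfold nearK
  exact Measurable.ite (measurableSet_lt (by fun_prop) (by fun_prop)) (by fun_prop) (by fun_prop)
@[fun_prop]
lemma farK_meas (α r : ℝ) : Measurable (farK N α r) := by
  unfold farK
  exact Measurable.ite (measurableSet_lt (by fun_prop) (by fun_prop)) (by fun_prop) (by fun_prop)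

lemma nearK_even (α r : ℝ) (z : Sp N) : nearK N α r (-z) = nearK N α r z := by
  simp [nearK, KK]

lemma near_add_far (α r : ℝ) : KK N α = fun z => nearK N α r z + farK N α r z := by
  ext z; unfold nearK farK; split_ifs <;> simp

lemma nearK_le (α r : ℝ) (z : Sp N) : nearK N α r z ≤ KK N α z := by
  unfold nearK; split_ifs <;> simp
lemma farK_le (α r : ℝ) (z : Sp N) : farK N α r z ≤ KK N α z := by
  unfold farK; split_ifs <;> simp

noncomputable def om (N : ℕ) : ℝ := (volume : Measure (Sp N)).real (Metric.ball 0 1)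

lemma om_pos : 0 < om N := by
  unfold om
  apply ENNReal.toReal_pos
  · exact (Metric.measure_ball_pos volume _ one_pos).ne'
  · exact measure_ball_lt_top.ne

lemma vol_ball (x : Sp N) {r : ℝ} (hr : 0 < r) :
    volume (Metric.ball x r) = ENNReal.ofReal (r ^ N * om N) := by
  rw [Measure.addHaar_ball_of_pos _ _ hr, finrank_euclideanSpace_fin, ENNReal.ofReal_mul (by positivity)]
  congr 1
  unfold om
  rw [ofReal_measureReal measure_ball_lt_top.ne]

lemma pow_mul_rpow_aux (hN : 1 ≤ N) {y : ℝ} (hy : 0 < y) (α : ℝ) :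
    y ^ (N - 1) * y ^ (-((N:ℝ) + α)) = y ^ (-1 - α) := by
  rw [← Real.rpow_natCast, ← Real.rpow_add hy, Nat.cast_sub hN]
  congr 1; push_cast; ring

lemma far_int (hN : 1 ≤ N) {s r : ℝ} (hs : 0 < s) (hr : 0 < r) :
    ∫⁻ z, farK N s r z = ENNReal.ofReal (N * om N * (r ^ (-s) / s)) := by
  have : Nonempty (Fin N) := ⟨⟨0, hN⟩⟩
  have : Nontrivial (Sp N) := inferInstance
  let f : ℝ → ℝ := (Set.Ici r).indicator fun y => y ^ (-((N:ℝ) + s))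
  have hf0 : ∀ y, 0 ≤ f y := fun y => Set.indicator_nonneg
    (fun y hy => Real.rpow_nonneg (hr.le.trans hy) _) y
  have hfar : ∀ z : Sp N, farK N s r z = ENNReal.ofReal (f ‖z‖) := by
    intro z
    by_cases h : ‖z‖ < r
    · have : ‖z‖ ∉ Set.Ici r := by simpa using h
      simp [farK, h, f]
    · have : ‖z‖ ∈ Set.Ici r := by simpa using h
      simp [farK, h, f, Set.indicator_of_mem this, KK]
  have hcongr : Set.EqOn (fun y : ℝ => y ^ (Module.finrank ℝ (Sp N) - 1) • f y)
      ((Set.Ici r).indicator fun y => y ^ (-1 - s)) (Set.Ioi 0) := by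
    intro y hy
    rw [finrank_euclideanSpace_fin]
    by_cases h : y ∈ Set.Ici r
    · simp only [f, Set.indicator_of_mem h, smul_eq_mul]
      exact pow_mul_rpow_aux hN hy s
    · simp only [f, Set.indicator_of_notMem h, smul_zero]
  have hint1 : IntegrableOn (fun y : ℝ => y ^ (-1 - s)) (Set.Ici r) := by
    rw [integrableOn_Ici_iff_integrableOn_Ioi]
    exact integrableOn_Ioi_rpow_of_lt (by linarith) hr
  have hint : Integrable (fun z : Sp N => f ‖z‖) := by
    rw [integrable_fun_norm_addHaar]
    rw [integrableOn_congr_fun hcongr measurableSet_Ioi]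
    exact (hint1.integrable_indicator measurableSet_Ici).integrableOn
  simp_rw [hfar]
  rw [← ofReal_integral_eq_lintegral_ofReal hint (Filter.Eventually.of_forall fun z => hf0 _),
    integral_fun_norm_addHaar, setIntegral_congr_fun measurableSet_Ioi hcongr,
    setIntegral_indicator measurableSet_Ici, finrank_euclideanSpace_fin]
  have : Set.Ioi (0:ℝ) ∩ Set.Ici r = Set.Ici r :=
    Set.inter_eq_right.2 fun y hy => hr.trans_le hy
  rw [this, integral_Ici_eq_integral_Ioi, integral_Ioi_rpow_of_lt (by linarith) hr]
  congr 1
  simp only [nsmul_eq_mul, smul_eq_mul, om]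
  have e : -1 - s + 1 = -s := by ring
  rw [e, neg_div_neg_eq, mul_assoc]

lemma near_int (hN : 1 ≤ N) {t r : ℝ} (ht : t < 1) :
    ∫⁻ z : Sp N, ENNReal.ofReal ‖z‖ * nearK N t r z < ⊤ := by
  have : Nonempty (Fin N) := ⟨⟨0, hN⟩⟩
  have : Nontrivial (Sp N) := inferInstance
  let f : ℝ → ℝ := fun y => y * y ^ (-((N:ℝ) + t))
  have hint : IntegrableOn (fun z : Sp N => f ‖z‖) (Metric.ball 0 r) := by
    rw [integrableOn_fun_norm_addHaar]
    have hcongr : Set.EqOn (fun y : ℝ => y ^ (Module.finrank ℝ (Sp N) - 1) • f y)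
      (fun y => y ^ (-t)) (Set.Ioo 0 r) := by
      intro y hy
      rw [finrank_euclideanSpace_fin]
      simp only [f, smul_eq_mul]
      rw [mul_left_comm, pow_mul_rpow_aux hN hy.1]
      nth_rewrite 1 [← Real.rpow_one y]
      rw [← Real.rpow_add hy.1]; congr 1; ring
    rw [integrableOn_congr_fun hcongr measurableSet_Ioo]
    by_cases hr : 0 < r
    · exact (intervalIntegral.integrableOn_Ioo_rpow_iff hr).2 (by linarith)
    · rw [Set.Ioo_eq_empty hr]; exact integrableOn_empty
  have h2 := hint.lintegral_lt_top
  rw [← lintegral_indicator measurableSet_ball] at h2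
  refine lt_of_le_of_lt (lintegral_mono fun z => ?_) h2
  unfold nearK
  split_ifs with h
  · rw [Set.indicator_of_mem (by simpa using h)]
    simp only [f, KK]
    rw [ENNReal.ofReal_mul (norm_nonneg _)]
  · simp

lemma near_low {E : Set (Sp N)} (hm : MeasurableSet E) {α r : ℝ} (hα : 0 < α) (hr : 0 < r)
    (h : ∀ x, volume (E ∩ Metric.ball x r) ≤ ENNReal.ofReal (r ^ N * om N / 2)) :
    ENNReal.ofReal (r ^ (-α) * om N / 2) * volume E ≤ IE (nearK N α r) E Eᶜ := by
  unfold IE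
  rw [← setLIntegral_const]
  refine setLIntegral_mono (IE_inner_meas (by fun_prop) _) fun x hx => ?_
  have h1 : ENNReal.ofReal (r ^ N * om N / 2) ≤ volume (Metric.ball x r \ E) := by
    have h2 := measure_inter_add_sdiff (μ := volume) (Metric.ball x r) hm
    rw [vol_ball x hr, Set.inter_comm] at h2
    have h3 : ENNReal.ofReal (r ^ N * om N) = ENNReal.ofReal (r ^ N * om N / 2) +
        ENNReal.ofReal (r ^ N * om N / 2) := by
      have := om_pos (N := N)
      rw [← ENNReal.ofReal_add (by positivity) (by positivity)]; congr 1; ring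
    have h4 : ENNReal.ofReal (r ^ N * om N / 2) + ENNReal.ofReal (r ^ N * om N / 2) ≤
        ENNReal.ofReal (r ^ N * om N / 2) + volume (Metric.ball x r \ E) := by
      rw [← h3, ← h2]
      gcongr
      exact h x
    exact (ENNReal.add_le_add_iff_left ENNReal.ofReal_ne_top).1 h4
  calc ENNReal.ofReal (r ^ (-α) * om N / 2)
      = ENNReal.ofReal (r ^ (-((N:ℝ)+α))) * ENNReal.ofReal (r ^ N * om N / 2) := by
        rw [← ENNReal.ofReal_mul (by positivity), ← Real.rpow_natCast, mul_div_assoc,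
          mul_div_assoc, ← mul_assoc, ← Real.rpow_add hr]
        congr 3; ring
    _ ≤ ENNReal.ofReal (r ^ (-((N:ℝ)+α))) * volume (Metric.ball x r \ E) := by gcongr
    _ = ∫⁻ y in Metric.ball x r \ E, ENNReal.ofReal (r ^ (-((N:ℝ)+α))) := by
        rw [setLIntegral_const]
    _ ≤ ∫⁻ y in Metric.ball x r \ E, nearK N α r (x - y) := by
        refine setLIntegral_mono (by fun_prop) fun y hy => ?_
        have hlt : ‖x - y‖ < r := by
          have := hy.1; rwa [Metric.mem_ball, dist_comm, dist_eq_norm] at this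
        have hpos : 0 < ‖x - y‖ := by
          rw [norm_pos_iff, sub_ne_zero]; rintro rfl; exact hy.2 hx
        simp only [nearK, hlt, if_true, KK]
        apply ENNReal.ofReal_le_ofReal
        exact Real.rpow_le_rpow_of_nonpos hpos hlt.le (by have : (0:ℝ) ≤ N := by positivity
                                                          linarith)
    _ ≤ _ := lintegral_mono_set fun y hy => hy.2

lemma star {E : Set (Sp N)} (hm : MeasurableSet E) {δ s t r : ℝ} (hδ0 : 0 < δ)
    (hs : 0 < s) (ht : t < 1) (hd : δ ≤ t - s) (hr : 0 < r)
    (hfin : fracPer N t E < ⊤) :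
    ENNReal.ofReal (δ / 2 * r ^ (s - t)) * IE (nearK N s (r / 2)) E Eᶜ
      ≤ ENNReal.ofReal (1 - t) * fracPer N t E := by
  set A := r ^ (s - t) with hA
  have hApos : 0 < A := by positivity
  let k : Sp N → ℝ≥0∞ := fun z => if ‖z‖ < r then
    ENNReal.ofReal (‖z‖ ^ (-((N:ℝ) + t)) - A * ‖z‖ ^ (-((N:ℝ) + s))) else 0
  have hk : Measurable k :=
    Measurable.ite (measurableSet_lt (by fun_prop) (by fun_prop)) (by fun_prop) (by fun_prop)
  rw [fracPer_eq] at hfin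
  rw [fracPer_eq, ← IE_const_mul (nearK_meas _ _), ← IE_const_mul (KK_meas _)]
  refine compare_lem hk (by fun_prop) (by fun_prop) hm ?_ ?_
  · refine ne_top_of_le_ne_top hfin.ne (IE_mono (fun z => ?_) le_rfl le_rfl)
    simp only [k]
    split_ifs
    · unfold KK
      apply ENNReal.ofReal_le_ofReal
      have : 0 ≤ A * ‖z‖ ^ (-((N:ℝ) + s)) := by positivity
      linarith
    · simp
  · intro z
    have hN0 : (0:ℝ) ≤ N := by positivity
    have hn2 : ‖(2:ℝ) • z‖ = 2 * ‖z‖ := by rw [norm_smul]; simp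
    by_cases hz : ‖z‖ < r / 2
    · have h1 : ‖(2:ℝ) • z‖ < r := by rw [hn2]; linarith
      have h2 : ‖z‖ < r := by linarith [norm_nonneg z]
      simp only [k, h1, h2, nearK, hz, if_true, KK]
      rw [hn2, Real.mul_rpow (by norm_num) (norm_nonneg _),
        Real.mul_rpow (by norm_num) (norm_nonneg _)]
      set a := ‖z‖ ^ (-((N:ℝ) + t)) with ha
      set b := ‖z‖ ^ (-((N:ℝ) + s)) with hb
      have ha0 : 0 ≤ a := by positivity
      have hb0 : 0 ≤ b := by positivity
      have hab : ∀ ρ : ℝ, 0 ≤ ρ → ρ < r → A * ρ ^ (-((N:ℝ) + s)) ≤ ρ ^ (-((N:ℝ) + t)) := by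
        intro ρ h0 hρ
        rcases h0.eq_or_lt with h | h
        · rw [← h, Real.zero_rpow (by linarith), Real.zero_rpow (by linarith)]; simp
        · have e : ρ ^ (-((N:ℝ) + t)) = ρ ^ (s - t) * ρ ^ (-((N:ℝ) + s)) := by
            rw [← Real.rpow_add h]; congr 1; ring
          rw [e]
          gcongr
          exact Real.rpow_le_rpow_of_nonpos h hρ.le (by linarith)
      have hab1 := hab _ (norm_nonneg z) h2
      have hab2 := hab (2 * ‖z‖) (by positivity) (by linarith)
      rw [Real.mul_rpow (by norm_num) (norm_nonneg _),
        Real.mul_rpow (by norm_num) (norm_nonneg _), ← ha, ← hb] at hab2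
      have e2 : (2:ℝ≥0∞) = ENNReal.ofReal 2 := by simp
      rw [e2, ← ENNReal.ofReal_mul (by positivity), ← ENNReal.ofReal_mul (by positivity),
        ← ENNReal.ofReal_mul (by positivity), ← ENNReal.ofReal_mul (by linarith),
        ← ENNReal.ofReal_add (mul_nonneg (by positivity) (by linarith)) (by positivity),
        ← ENNReal.ofReal_add (by linarith) (mul_nonneg (by linarith) ha0)]
      apply ENNReal.ofReal_le_ofReal
      have f1 : ∀ β : ℝ, (2:ℝ) ^ N * 2 * 2 ^ (-((N:ℝ) + β)) = 2 ^ (1 - β) := by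
        intro β
        have h2 : (2:ℝ) = (2:ℝ) ^ (1:ℝ) := by simp
        rw [← Real.rpow_natCast]
        nth_rewrite 2 [h2]
        rw [← Real.rpow_add two_pos, ← Real.rpow_add two_pos]; congr 1; ring
      have g1 : (2:ℝ) ^ (1 - t) ≤ 1 + (1 - t) := by
        have := rpow_one_add_le_one_add_mul_self (s := 1) (p := 1 - t) (by norm_num) (by linarith)
          (by linarith)
        norm_num at this; linarith
      have g2 : 1 + δ / 2 ≤ (2:ℝ) ^ (1 - s) := by
        have h3 : (2:ℝ) ^ δ ≤ 2 ^ (1 - s) :=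
          Real.rpow_le_rpow_of_exponent_le (by norm_num) (by linarith)
        have h4 := Real.add_one_le_exp (Real.log 2 * δ)
        rw [← Real.rpow_def_of_pos two_pos] at h4
        have := Real.log_two_gt_d9
        nlinarith
      have e3 : (2:ℝ) ^ N * 2 * (2 ^ (-((N:ℝ) + t)) * a - A * (2 ^ (-((N:ℝ) + s)) * b))
          = 2 ^ (1 - t) * a - A * 2 ^ (1 - s) * b := by
        rw [← f1 t, ← f1 s]; ring
      rw [e3]
      have h5 : 0 ≤ A * b := by positivity
      nlinarith [mul_le_mul_of_nonneg_right g1 ha0, mul_le_mul_of_nonneg_right g2 h5]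
    · have h1 : ¬ ‖(2:ℝ) • z‖ < r := by rw [hn2]; linarith
      simp [k, h1, nearK, hz]

end radial

end partP2


section partP3
open MeasureTheory ENNReal

section key
variable {N : ℕ}

lemma Ps_split (hN : 1 ≤ N) {s r : ℝ} (hs : 0 < s) (hr : 0 < r) (E : Set (Sp N)) :
    fracPer N s E ≤ IE (nearK N s r) E Eᶜ +
      ENNReal.ofReal (N * om N * (r ^ (-s) / s)) * volume E := by
  rw [fracPer_eq, near_add_far s r, IE_add (nearK_meas s r)]
  gcongr
  rw [← far_int hN hs hr]
  exact IE_le _ _ _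

lemma key (hN : 1 ≤ N) {δ : ℝ} (hδ0 : 0 < δ) (hδ1 : δ < 1) :
    ∃ m₀ : ℝ, 0 < m₀ ∧ ∃ c : ℝ, 0 < c ∧ ∀ s t : ℝ, 0 < s → s < t → t < 1 → δ ≤ t - s →
      ∀ E : Set (Sp N), MeasurableSet E → volume E ≤ ENNReal.ofReal m₀ → fracPer N t E < ⊤ →
      ENNReal.ofReal s * fracPer N s E ≤ ENNReal.ofReal ((1 - t) / 2) * fracPer N t E ∧
      ENNReal.ofReal c * volume E ≤ ENNReal.ofReal (1 - t) * fracPer N t E := by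
  have hom := om_pos (N := N)
  have hNr : (1:ℝ) ≤ N := by exact_mod_cast hN
  set ρ₁ : ℝ := (δ / 8) ^ (1 / δ) / 2 with hρ₁
  have hρ₁0 : 0 < ρ₁ := by positivity
  have h2ρ₁ : 2 * ρ₁ ≤ 1 := by
    have : (δ / 8) ^ (1 / δ) ≤ 1 := Real.rpow_le_one (by positivity) (by linarith) (by positivity)
    rw [hρ₁]; linarith
  have hρ₁δ : (2 * ρ₁) ^ δ = δ / 8 := by
    rw [hρ₁, mul_div_cancel₀ _ (by norm_num : (2:ℝ) ≠ 0), ← Real.rpow_mul (by positivity),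
      one_div_mul_cancel hδ0.ne', Real.rpow_one]
  set Q : ℝ := 32 * N / (δ * ρ₁) with hQ
  have hQ1 : 1 ≤ Q := by
    rw [hQ, le_div_iff₀ (by positivity)]
    nlinarith
  set ρ₂ : ℝ := Q ^ (-(1 / δ)) with hρ₂
  have hρ₂0 : 0 < ρ₂ := by positivity
  have hρ₂1 : ρ₂ ≤ 1 := Real.rpow_le_one_of_one_le_of_nonpos hQ1 (by
    have : 0 < 1 / δ := by positivity
    linarith)
  have hρ₂δ : ρ₂ ^ (-δ) = Q := by
    rw [hρ₂, ← Real.rpow_mul (by positivity), neg_mul_neg, one_div_mul_cancel hδ0.ne',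
      Real.rpow_one]
  refine ⟨ρ₂ ^ N * om N / 2, by positivity, 4 * N * om N / ρ₁, by positivity, ?_⟩
  intro s t hs hst ht hd E hm hvol hfin
  set T := ENNReal.ofReal (1 - t) * fracPer N t E with hT
  -- isoperimetric bound
  have hiso : ENNReal.ofReal (4 * N * om N / ρ₁) * volume E ≤ T := by
    have h1 := star hm hδ0 hs ht hd (r := 2 * ρ₂) (by positivity) hfin
    rw [mul_div_cancel_left₀ _ (by norm_num : (2:ℝ) ≠ 0)] at h1
    have h2 := near_low hm hs hρ₂0 (fun x => (measure_mono Set.inter_subset_left).trans hvol)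
    refine le_trans ?_ (le_trans (mul_le_mul_right h2 _) h1)
    rw [← mul_assoc, ← ENNReal.ofReal_mul (by positivity)]
    gcongr
    have e1 : (2 * ρ₂) ^ (s - t) * ρ₂ ^ (-s) = 2 ^ (s - t) * ρ₂ ^ (-t) := by
      rw [Real.mul_rpow (by norm_num) hρ₂0.le, mul_assoc, ← Real.rpow_add hρ₂0]
      congr 2; ring
    have e2 : (1:ℝ) / 2 ≤ 2 ^ (s - t) := by
      have := Real.rpow_le_rpow_of_exponent_le (x := 2) (by norm_num) (show (-1:ℝ) ≤ s - t by linarith)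
      rw [Real.rpow_neg_one] at this
      linarith
    have e3 : Q ≤ ρ₂ ^ (-t) := by
      rw [← hρ₂δ]
      exact Real.rpow_le_rpow_of_exponent_ge hρ₂0 hρ₂1 (by linarith)
    have e4 : Q / 2 ≤ (2 * ρ₂) ^ (s - t) * ρ₂ ^ (-s) := by
      rw [e1]
      calc Q / 2 = 1 / 2 * Q := by ring
        _ ≤ _ := by gcongr
    calc 4 * N * om N / ρ₁ = (δ * om N / 4) * (Q / 2) := by
          rw [hQ]; field_simp; norm_num
      _ ≤ (δ * om N / 4) * ((2 * ρ₂) ^ (s - t) * ρ₂ ^ (-s)) := by gcongr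
      _ = _ := by ring
  refine ⟨?_, hiso⟩
  have h1 := star hm hδ0 hs ht hd (r := 2 * ρ₁) (by positivity) hfin
  rw [mul_div_cancel_left₀ _ (by norm_num : (2:ℝ) ≠ 0), ← hT] at h1
  have h3 : ENNReal.ofReal 4 * IE (nearK N s ρ₁) E Eᶜ ≤ T := by
    refine le_trans ?_ h1
    gcongr
    have : (2 * ρ₁) ^ (-δ) ≤ (2 * ρ₁) ^ (s - t) :=
      Real.rpow_le_rpow_of_exponent_ge (by positivity) h2ρ₁ (by linarith)
    rw [Real.rpow_neg (by positivity), hρ₁δ] at this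
    calc 4 = δ / 2 * (δ / 8)⁻¹ := by field_simp; norm_num
      _ ≤ _ := by gcongr
  have h4 : ENNReal.ofReal s * (ENNReal.ofReal (N * om N * (ρ₁ ^ (-s) / s)) * volume E)
      ≤ ENNReal.ofReal (N * om N / ρ₁) * volume E := by
    rw [← mul_assoc, ← ENNReal.ofReal_mul hs.le]
    gcongr
    have : ρ₁ ^ (-s) ≤ ρ₁⁻¹ := by
      rw [← Real.rpow_neg_one]
      exact Real.rpow_le_rpow_of_exponent_ge hρ₁0 (by linarith) (by linarith)
    calc s * (N * om N * (ρ₁ ^ (-s) / s)) = N * om N * ρ₁ ^ (-s) := by field_simp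
      _ ≤ N * om N * ρ₁⁻¹ := by gcongr
      _ = _ := by ring
  have h5 : ENNReal.ofReal 4 * (ENNReal.ofReal (N * om N / ρ₁) * volume E) ≤ T := by
    refine le_trans (le_of_eq ?_) hiso
    rw [← mul_assoc, ← ENNReal.ofReal_mul (by norm_num)]
    congr 2; ring
  have h6 : ENNReal.ofReal s * fracPer N s E ≤ IE (nearK N s ρ₁) E Eᶜ +
      ENNReal.ofReal (N * om N / ρ₁) * volume E := by
    refine (mul_le_mul_right (Ps_split hN hs hρ₁0 E) _).trans ?_
    rw [mul_add]
    refine add_le_add ?_ h4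
    calc _ ≤ 1 * IE (nearK N s ρ₁) E Eᶜ := by
          gcongr
          rw [← ENNReal.ofReal_one]; exact ENNReal.ofReal_le_ofReal (by linarith)
      _ = _ := one_mul _
  have h7 : ENNReal.ofReal 4 * (ENNReal.ofReal s * fracPer N s E) ≤
      ENNReal.ofReal 4 * (ENNReal.ofReal ((1 - t) / 2) * fracPer N t E) := by
    calc _ ≤ ENNReal.ofReal 4 * IE (nearK N s ρ₁) E Eᶜ +
          ENNReal.ofReal 4 * (ENNReal.ofReal (N * om N / ρ₁) * volume E) := by
          rw [← mul_add]; gcongr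
      _ ≤ T + T := add_le_add h3 h5
      _ = _ := by
        rw [hT, ← mul_assoc, ← ENNReal.ofReal_mul (by norm_num), ← two_mul, ← mul_assoc]
        congr 1
        rw [show (2:ℝ≥0∞) = ENNReal.ofReal 2 by simp, ← ENNReal.ofReal_mul (by norm_num)]
        congr 1; ring
  exact (ENNReal.mul_le_mul_iff_right (by simp) ENNReal.ofReal_ne_top).1 h7

lemma KK_near_le {s t : ℝ} (hst : s < t) (hs : 0 < s) (z : Sp N) :
    nearK N s 1 z ≤ KK N t z := by
  unfold nearK KK
  split_ifs with h
  · apply ENNReal.ofReal_le_ofReal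
    rcases (norm_nonneg z).eq_or_lt with h0 | h0
    · have : (0:ℝ) ≤ N := by positivity
      rw [← h0, Real.zero_rpow (by linarith), Real.zero_rpow (by linarith)]
    · exact Real.rpow_le_rpow_of_exponent_ge h0 h.le (by linarith)
  · simp

lemma Ps_fin (hN : 1 ≤ N) {s t : ℝ} (hs : 0 < s) (hst : s < t) {E : Set (Sp N)}
    (hv : volume E ≠ ⊤) (hfin : fracPer N t E < ⊤) : fracPer N s E < ⊤ := by
  refine lt_of_le_of_lt (Ps_split hN hs one_pos E) (ENNReal.add_lt_top.2 ⟨?_, ?_⟩)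
  · exact lt_of_le_of_lt (IE_mono (KK_near_le hst hs) le_rfl le_rfl) hfin
  · exact ENNReal.mul_lt_top ENNReal.ofReal_lt_top hv.lt_top

end key

end partP3


section partP4
open MeasureTheory ENNReal

section cut
variable {N : ℕ}

lemma cut_lem {k : Sp N → ℝ≥0∞} (hk : Measurable k) {E : Set (Sp N)} (hm : MeasurableSet E)
    (R₀ : ℝ) {L : ℝ} (hL : 0 < L) :
    ∃ R ∈ Set.Ioo R₀ (R₀ + L), IE k (E ∩ Metric.ball 0 R) (E \ Metric.ball 0 R) * ENNReal.ofReal L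
      ≤ (∫⁻ z, ENNReal.ofReal ‖z‖ * k z) * volume E := by
  let μE : Measure (Sp N) := volume.restrict E
  let g : ℝ → Sp N × Sp N → ℝ≥0∞ := fun R p =>
    if ‖p.1‖ < R ∧ R ≤ ‖p.2‖ then k (p.1 - p.2) else 0
  have hg : Measurable (Function.uncurry g) := by
    have h1 : MeasurableSet {q : ℝ × (Sp N × Sp N) | ‖q.2.1‖ < q.1} :=
      measurableSet_lt (by fun_prop) (by fun_prop)
    have h2 : MeasurableSet {q : ℝ × (Sp N × Sp N) | q.1 ≤ ‖q.2.2‖} :=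
      measurableSet_le (by fun_prop) (by fun_prop)
    exact Measurable.ite (h1.inter h2) (by fun_prop) (by fun_prop)
  have hf : ∀ R, IE k (E ∩ Metric.ball 0 R) (E \ Metric.ball 0 R) = ∫⁻ p, g R p ∂(μE.prod μE) := by
    intro R
    have hgR : Measurable (g R) := 
      hg.of_uncurry_left
    rw [lintegral_prod _ hgR.aemeasurable]
    unfold IE
    rw [Set.inter_comm, ← Measure.restrict_restrict measurableSet_ball,
      ← lintegral_indicator measurableSet_ball]
    congr 1; ext x
    by_cases hx : x ∈ Metric.ball (0 : Sp N) R
    · rw [Set.indicator_of_mem hx]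
      have : E \ Metric.ball 0 R = (Metric.ball 0 R)ᶜ ∩ E := by
        rw [Set.inter_comm]; rfl
      rw [this, ← Measure.restrict_restrict measurableSet_ball.compl,
        ← lintegral_indicator measurableSet_ball.compl]
      congr 1; ext y
      have hx' : ‖x‖ < R := by simpa using hx
      by_cases hy : ‖y‖ < R
      · rw [Set.indicator_of_notMem (by simpa using hy)]
        simp [g, hy]
      · rw [Set.indicator_of_mem (by simpa using hy)]
        simp [g, hx', not_lt.1 hy]
    · rw [Set.indicator_of_notMem hx]
      have hx' : ¬ ‖x‖ < R := by simpa using hx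
      simp [g, hx']
  have hvol : (volume (Set.Ioo R₀ (R₀ + L))) = ENNReal.ofReal L := by
    rw [Real.volume_Ioo]; congr 1; ring
  obtain ⟨R, hR, h⟩ := exists_le_setLAverage (μ := (volume : Measure ℝ))
    (s := Set.Ioo R₀ (R₀ + L)) (f := fun R => ∫⁻ p, g R p ∂(μE.prod μE))
    (by rw [hvol]; simpa using hL) (by rw [hvol]; simp)
    (hg.lintegral_prod_right').aemeasurable
  refine ⟨R, hR, ?_⟩
  rw [hf]
  rw [setLAverage_eq, hvol] at h
  refine (mul_le_mul_left h _).trans ?_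
  rw [ENNReal.div_mul_cancel (by simpa using hL) (by simp)]
  rw [lintegral_lintegral_swap hg.aemeasurable]
  have hle : ∀ p : Sp N × Sp N, ∫⁻ R in Set.Ioo R₀ (R₀ + L), g R p ≤
      ENNReal.ofReal ‖p.1 - p.2‖ * k (p.1 - p.2) := by
    intro p
    calc ∫⁻ R in Set.Ioo R₀ (R₀ + L), g R p ≤ ∫⁻ R, g R p := setLIntegral_le_lintegral _ _
      _ = ∫⁻ R, (Set.Ioc ‖p.1‖ ‖p.2‖).indicator (fun _ => k (p.1 - p.2)) R := by
        refine lintegral_congr fun R => ?_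
        by_cases h : R ∈ Set.Ioc ‖p.1‖ ‖p.2‖
        · rw [Set.indicator_of_mem h]; exact if_pos h
        · rw [Set.indicator_of_notMem h]; exact if_neg h
      _ = k (p.1 - p.2) * ENNReal.ofReal (‖p.2‖ - ‖p.1‖) := by
        rw [lintegral_indicator_const measurableSet_Ioc, Real.volume_Ioc]
      _ ≤ k (p.1 - p.2) * ENNReal.ofReal ‖p.1 - p.2‖ := by
        gcongr
        rw [norm_sub_rev]; exact norm_sub_norm_le _ _
      _ = _ := mul_comm _ _
  refine (lintegral_mono hle).trans ?_
  rw [lintegral_prod _ (by fun_prop)]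
  exact IE_le (fun z => ENNReal.ofReal ‖z‖ * k z) E E

lemma exists_fin (hN : 1 ≤ N) {t m : ℝ} (ht0 : 0 < t) (ht : t < 1) (hm : 0 < m) :
    ∃ E : Set (Sp N), MeasurableSet E ∧ volume E = ENNReal.ofReal m ∧ fracPer N t E < ⊤ := by
  have hom := om_pos (N := N)
  obtain ⟨R, hR, h⟩ := cut_lem (nearK_meas (N := N) t 1) (E := Metric.ball 0 3)
    measurableSet_ball 1 one_pos
  have hR0 : 0 < R := by linarith [hR.1]
  have hR2 : R < 2 := by linarith [hR.2]
  set B := Metric.ball (0 : Sp N) R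
  have hBv : volume B ≠ ⊤ := measure_ball_lt_top.ne
  have hB3 : B ⊆ Metric.ball (0 : Sp N) 3 := Metric.ball_subset_ball (by linarith)
  have h1 : IE (nearK N t 1) B (Metric.ball 0 3 \ B) < ⊤ := by
    rw [Set.inter_eq_right.2 hB3] at h
    simp only [ENNReal.ofReal_one, mul_one] at h
    exact lt_of_le_of_lt h (ENNReal.mul_lt_top (near_int hN ht) measure_ball_lt_top)
  have h2 : IE (nearK N t 1) B (Metric.ball 0 3)ᶜ = 0 := by
    unfold IE
    refine (setLIntegral_congr_fun (g := fun _ => 0) measurableSet_ball fun x hx => ?_).trans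
      (by simp)
    refine (setLIntegral_congr_fun (g := fun _ => 0) measurableSet_ball.compl
      fun y hy => ?_).trans (by simp)
    have hx' : ‖x‖ < R := by simpa [B] using hx
    have hy' : 3 ≤ ‖y‖ := by simpa using hy
    have : ¬ ‖x - y‖ < 1 := by
      have := norm_sub_norm_le y x
      rw [norm_sub_rev] at this
      linarith
    simp [nearK, this]
  have hBc : Bᶜ = (Metric.ball 0 3 \ B) ∪ (Metric.ball 0 3)ᶜ := by
    ext x
    have := @hB3 x
    simp only [Set.mem_compl_iff, Set.mem_union, Set.mem_sdiff]
    tauto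
  have hB : fracPer N t B < ⊤ := by
    rw [fracPer_eq, near_add_far t 1, IE_add (nearK_meas t 1)]
    refine ENNReal.add_lt_top.2 ⟨?_, ?_⟩
    · rw [hBc, IE_union_right (nearK_meas t 1) _ measurableSet_ball.compl, h2, add_zero]
      · exact h1
      · exact Set.disjoint_compl_right_iff_subset.2 Set.sdiff_subset
    · refine lt_of_le_of_lt (IE_le _ _ _) ?_
      rw [far_int hN ht0 one_pos]
      exact ENNReal.mul_lt_top ENNReal.ofReal_lt_top measure_ball_lt_top
  set q : ℝ := m / (R ^ N * om N) with hq
  have hq0 : 0 < q := by positivity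
  set r : ℝ := q ^ (1 / (N:ℝ)) with hr
  have hr0 : 0 < r := by positivity
  have hrN : r ^ N = q := by
    rw [hr, ← Real.rpow_natCast, ← Real.rpow_mul hq0.le, one_div_mul_cancel, Real.rpow_one]
    have : (1:ℝ) ≤ N := by exact_mod_cast hN
    positivity
  refine ⟨(r⁻¹ • ·) ⁻¹' B, ?_, ?_, ?_⟩
  · exact (measurable_const_smul r⁻¹) measurableSet_ball
  · rw [vol_scale hr0, hrN, vol_ball _ hR0, ← ENNReal.ofReal_mul hq0.le, hq,
      div_mul_cancel₀ _ (by positivity)]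
  · rw [fracPer_scale t measurableSet_ball hr0]
    exact ENNReal.mul_lt_top ENNReal.ofReal_lt_top hB

end cut

section Jen
variable {N : ℕ}

noncomputable def kp (N : ℕ) (s t : ℝ) : Sp N → ℝ≥0∞ := fun z =>
  ENNReal.ofReal (1 - t) * KK N t z - ENNReal.ofReal s * KK N s z
noncomputable def km (N : ℕ) (s t : ℝ) : Sp N → ℝ≥0∞ := fun z =>
  ENNReal.ofReal s * KK N s z - ENNReal.ofReal (1 - t) * KK N t z

@[fun_prop]
lemma kp_meas (s t : ℝ) : Measurable (kp N s t) := by unfold kp; fun_prop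
@[fun_prop]
lemma km_meas (s t : ℝ) : Measurable (km N s t) := by unfold km; fun_prop

lemma kp_even (s t : ℝ) (z : Sp N) : kp N s t (-z) = kp N s t z := by simp [kp, KK_even]
lemma km_even (s t : ℝ) (z : Sp N) : km N s t (-z) = km N s t z := by simp [km, KK_even]

noncomputable def JJ (N : ℕ) (s t : ℝ) (E : Set (Sp N)) : ℝ≥0∞ :=
  IE (kp N s t) E Eᶜ + IE (km N s t) E E

noncomputable def rr (s t : ℝ) : ℝ := ((1 - t) / s) ^ (1 / (t - s))

lemma rr_pos {s t : ℝ} (hs : 0 < s) (ht : t < 1) : 0 < rr s t := by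
  unfold rr
  have : 0 < (1 - t) / s := div_pos (by linarith) hs
  positivity

lemma rr_pow {s t : ℝ} (hs : 0 < s) (hst : s < t) (ht : t < 1) :
    s * (rr s t) ^ (t - s) = 1 - t := by
  have h : 0 < (1 - t) / s := div_pos (by linarith) hs
  unfold rr
  rw [← Real.rpow_mul h.le, one_div_mul_cancel (by linarith), Real.rpow_one]
  field_simp

lemma KK_split {s t : ℝ} {z : Sp N} (hz : 0 < ‖z‖) :
    ‖z‖ ^ (-((N:ℝ) + s)) = ‖z‖ ^ (t - s) * ‖z‖ ^ (-((N:ℝ) + t)) := by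
  rw [← Real.rpow_add hz]; congr 1; ring

lemma kp_far {s t : ℝ} (hs : 0 < s) (hst : s < t) (ht : t < 1) {z : Sp N}
    (hz : rr s t ≤ ‖z‖) : kp N s t z = 0 := by
  have hz0 : 0 < ‖z‖ := (rr_pos hs ht).trans_le hz
  unfold kp KK
  rw [tsub_eq_zero_iff_le, ← ENNReal.ofReal_mul (by linarith), ← ENNReal.ofReal_mul hs.le]
  apply ENNReal.ofReal_le_ofReal
  have := rr_pos hs ht
  have e := rr_pow hs hst ht
  have h2 : rr s t ^ (t - s) ≤ ‖z‖ ^ (t - s) := Real.rpow_le_rpow this.le hz (by linarith)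
  rw [KK_split (s := s) (t := t) hz0, ← mul_assoc, ← e]
  gcongr

lemma km_near {s t : ℝ} (hs : 0 < s) (hst : s < t) (ht : t < 1) {z : Sp N}
    (hz : ‖z‖ < rr s t) : km N s t z = 0 := by
  unfold km KK
  rw [tsub_eq_zero_iff_le, ← ENNReal.ofReal_mul hs.le, ← ENNReal.ofReal_mul (by linarith)]
  apply ENNReal.ofReal_le_ofReal
  rcases (norm_nonneg z).eq_or_lt with h0 | h0
  · have : (0:ℝ) ≤ N := by positivity
    rw [← h0, Real.zero_rpow (by linarith), Real.zero_rpow (by linarith)]; simp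
  · have e := rr_pow hs hst ht
    have h2 : ‖z‖ ^ (t - s) ≤ rr s t ^ (t - s) := Real.rpow_le_rpow h0.le hz.le (by linarith)
    rw [KK_split (s := s) (t := t) h0, ← mul_assoc, ← e]
    gcongr

lemma kp_le {s t : ℝ} (hs : 0 < s) (hst : s < t) (ht : t < 1) (z : Sp N) :
    kp N s t z ≤ nearK N t (rr s t) z := by
  by_cases h : ‖z‖ < rr s t
  · simp only [nearK, h, if_true]
    unfold kp
    refine tsub_le_self.trans ?_
    calc _ ≤ 1 * KK N t z := by
          gcongr
          rw [← ENNReal.ofReal_one]; exact ENNReal.ofReal_le_ofReal (by linarith)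
      _ = _ := one_mul _
  · rw [kp_far hs hst ht (not_lt.1 h)]; simp

lemma km_int (hN : 1 ≤ N) {s t : ℝ} (hs : 0 < s) (hst : s < t) (ht : t < 1) :
    ∫⁻ z, km N s t z ≠ ⊤ := by
  have h : ∫⁻ z, ENNReal.ofReal s * farK N s (rr s t) z ≠ ⊤ := by
    rw [lintegral_const_mul _ (by fun_prop), far_int hN hs (rr_pos hs ht)]
    exact ENNReal.mul_ne_top ENNReal.ofReal_ne_top ENNReal.ofReal_ne_top
  refine ne_top_of_le_ne_top h (lintegral_mono fun z => ?_)
  by_cases h : ‖z‖ < rr s t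
  · rw [km_near hs hst ht h]; simp
  · simp only [farK, h, if_false]
    exact tsub_le_self

lemma JJ_eq {s t : ℝ} {E : Set (Sp N)} (hm : MeasurableSet E) :
    ENNReal.ofReal (1 - t) * fracPer N t E + (∫⁻ z, km N s t z) * volume E
      = ENNReal.ofReal s * fracPer N s E + JJ N s t E := by
  rw [← IE_univ, ← Set.compl_union_self E, IE_union_right (km_meas s t) _ hm disjoint_compl_left,
    fracPer_eq, fracPer_eq, ← IE_const_mul (KK_meas t), ← IE_const_mul (KK_meas s), JJ,
    ← add_assoc, ← add_assoc, ← IE_add (by fun_prop), ← IE_add (by fun_prop)]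
  congr 2
  ext z
  unfold km kp
  rw [add_tsub_eq_max, add_tsub_eq_max, max_comm]

lemma JJ_free (hN : 1 ≤ N) {s t m : ℝ} (hs : 0 < s) (hst : s < t) (ht : t < 1) (hm0 : 0 ≤ m)
    {E : Set (Sp N)} (hm : MeasurableSet E) (hv : volume E = ENNReal.ofReal m)
    (hfin : fracPer N t E < ⊤) :
    JJ N s t E < ⊤ ∧
      freeEnergy N s t E + (∫⁻ z, km N s t z).toReal * m = (JJ N s t E).toReal := by
  have h := JJ_eq (s := s) (t := t) hm
  have hs' := Ps_fin hN hs hst (by rw [hv]; simp) hfin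
  have hkm := km_int hN hs hst ht
  have hl : ENNReal.ofReal (1 - t) * fracPer N t E ≠ ⊤ :=
    ENNReal.mul_ne_top ENNReal.ofReal_ne_top hfin.ne
  have hl2 : (∫⁻ z, km N s t z) * volume E ≠ ⊤ := by
    rw [hv]; exact ENNReal.mul_ne_top hkm ENNReal.ofReal_ne_top
  have hl3 : ENNReal.ofReal s * fracPer N s E ≠ ⊤ :=
    ENNReal.mul_ne_top ENNReal.ofReal_ne_top hs'.ne
  have hJ : JJ N s t E ≠ ⊤ := by
    refine ne_top_of_le_ne_top (b := ENNReal.ofReal (1 - t) * fracPer N t E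
      + (∫⁻ z, km N s t z) * volume E) (ENNReal.add_ne_top.2 ⟨hl, hl2⟩) ?_
    rw [h]; exact le_add_self
  refine ⟨hJ.lt_top, ?_⟩
  have h' := congrArg ENNReal.toReal h
  rw [ENNReal.toReal_add hl hl2, ENNReal.toReal_add hl3 hJ, ENNReal.toReal_mul, ENNReal.toReal_mul,
    ENNReal.toReal_mul, ENNReal.toReal_ofReal (by linarith), ENNReal.toReal_ofReal hs.le, hv,
    ENNReal.toReal_ofReal hm0] at h'
  unfold freeEnergy
  linarith

lemma JJ_split {s t : ℝ} {E S : Set (Sp N)} (hm : MeasurableSet E)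
    (hS : MeasurableSet S) :
    JJ N s t (E ∩ S) + JJ N s t (E \ S) ≤ JJ N s t E + 2 * IE (kp N s t) (E ∩ S) (E \ S) := by
  set A := E ∩ S
  set B := E \ S
  have hA : MeasurableSet A := hm.inter hS
  have hB : MeasurableSet B := hm.diff hS
  have hd : Disjoint A B := Set.disjoint_sdiff_right.mono_left Set.inter_subset_right
  have hE : E = A ∪ B := (Set.inter_union_sdiff E S).symm
  have hAc : Aᶜ = Eᶜ ∪ B := by
    ext x; simp only [A, B, Set.mem_compl_iff, Set.mem_union, Set.mem_inter_iff, Set.mem_sdiff]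
    tauto
  have hBc : Bᶜ = Eᶜ ∪ A := by
    ext x; simp only [A, B, Set.mem_compl_iff, Set.mem_union, Set.mem_inter_iff, Set.mem_sdiff]
    tauto
  have d1 : Disjoint Eᶜ B := disjoint_compl_left.mono_right Set.sdiff_subset
  have d2 : Disjoint Eᶜ A := disjoint_compl_left.mono_right Set.inter_subset_left
  have h1 : IE (kp N s t) E Eᶜ = IE (kp N s t) A Eᶜ + IE (kp N s t) B Eᶜ := by
    conv_lhs => rw [hE]
    rw [IE_union_left _ hB hd, ← hE]
  have h2 : IE (km N s t) A A + IE (km N s t) B B ≤ IE (km N s t) E E := by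
    conv_rhs => rw [hE]
    rw [IE_union_left _ hB hd]
    exact add_le_add (IE_mono (fun _ => le_rfl) le_rfl Set.subset_union_left)
      (IE_mono (fun _ => le_rfl) le_rfl Set.subset_union_right)
  have h3 : IE (kp N s t) B A = IE (kp N s t) A B := IE_comm (kp_meas s t) (kp_even s t) _ _
  unfold JJ
  rw [hAc, hBc, IE_union_right (kp_meas s t) _ hB d1, IE_union_right (kp_meas s t) _ hA d2, h1, h3]
  calc _ = (IE (kp N s t) A Eᶜ + IE (kp N s t) B Eᶜ + (IE (km N s t) A A + IE (km N s t) B B))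
        + 2 * IE (kp N s t) A B := by ring
    _ ≤ _ := by gcongr

lemma per_split_fin (hN : 1 ≤ N) {t r : ℝ} (ht0 : 0 < t) (hr : 0 < r) {E S : Set (Sp N)}
    (hm : MeasurableSet E) (hS : MeasurableSet S) (hv : volume E ≠ ⊤) (hfin : fracPer N t E < ⊤)
    (h : IE (nearK N t r) (E ∩ S) (E \ S) < ⊤) :
    fracPer N t (E ∩ S) < ⊤ ∧ fracPer N t (E \ S) < ⊤ := by
  have hK : IE (KK N t) (E ∩ S) (E \ S) < ⊤ := by
    rw [near_add_far t r, IE_add (nearK_meas t r)]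
    refine ENNReal.add_lt_top.2 ⟨h, lt_of_le_of_lt (IE_le _ _ _) ?_⟩
    rw [far_int hN ht0 hr]
    exact ENNReal.mul_lt_top ENNReal.ofReal_lt_top
      (lt_of_le_of_lt (measure_mono Set.inter_subset_left) hv.lt_top)
  have hAc : (E ∩ S)ᶜ = Eᶜ ∪ (E \ S) := by
    ext x; simp only [Set.mem_compl_iff, Set.mem_union, Set.mem_inter_iff, Set.mem_sdiff]
    tauto
  have hBc : (E \ S)ᶜ = Eᶜ ∪ (E ∩ S) := by
    ext x; simp only [Set.mem_compl_iff, Set.mem_union, Set.mem_inter_iff, Set.mem_sdiff]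
    tauto
  rw [fracPer_eq] at hfin
  constructor
  · rw [fracPer_eq, hAc, IE_union_right (KK_meas t) _ (hm.diff hS)
      (disjoint_compl_left.mono_right Set.sdiff_subset)]
    exact ENNReal.add_lt_top.2 ⟨lt_of_le_of_lt
      (IE_mono (fun _ => le_rfl) Set.inter_subset_left le_rfl) hfin, hK⟩
  · rw [fracPer_eq, hBc, IE_union_right (KK_meas t) _ (hm.inter hS)
      (disjoint_compl_left.mono_right Set.inter_subset_left),
      IE_comm (KK_meas t) (KK_even t) _ (E ∩ S)]
    exact ENNReal.add_lt_top.2 ⟨lt_of_le_of_lt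
      (IE_mono (fun _ => le_rfl) Set.sdiff_subset le_rfl) hfin, hK⟩

end Jen

end partP4


section partP5
open MeasureTheory ENNReal Filter Topology

section lsc
variable {N : ℕ}

lemma lsc_lem {k₁ k₂ : Sp N → ℝ≥0∞} (hk₁ : Measurable k₁) (hk₂ : Measurable k₂)
    {E : ℕ → Set (Sp N)} {F : Set (Sp N)} (hE : ∀ n, MeasurableSet (E n)) (hF : MeasurableSet F)
    (h : ∀ᵐ x, ∀ᶠ n in atTop, (x ∈ E n ↔ x ∈ F)) :
    IE k₁ F Fᶜ + IE k₂ F F ≤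
      liminf (fun n => IE k₁ (E n) (E n)ᶜ + IE k₂ (E n) (E n)) atTop := by
  classical
  let f : Set (Sp N) → Sp N × Sp N → ℝ≥0∞ := fun G p =>
    (G ×ˢ Gᶜ).indicator (fun p => k₁ (p.1 - p.2)) p + (G ×ˢ G).indicator (fun p => k₂ (p.1 - p.2)) p
  have hf : ∀ G, MeasurableSet G → Measurable (f G) := by
    intro G hG
    exact ((hk₁.comp (measurable_fst.sub measurable_snd)).indicator (hG.prod hG.compl)).add
      ((hk₂.comp (measurable_fst.sub measurable_snd)).indicator (hG.prod hG))
  have hI : ∀ (k : Sp N → ℝ≥0∞), Measurable k → ∀ A B : Set (Sp N), MeasurableSet A →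
      MeasurableSet B → IE k A B = ∫⁻ p, (A ×ˢ B).indicator
        (fun p : Sp N × Sp N => k (p.1 - p.2)) p ∂((volume : Measure (Sp N)).prod volume) := by
    intro k hk A B hA hB
    rw [lintegral_indicator (hA.prod hB), ← Measure.prod_restrict, lintegral_prod _ (by fun_prop)]
    rfl
  have hJ : ∀ G, MeasurableSet G → IE k₁ G Gᶜ + IE k₂ G G =
      ∫⁻ p, f G p ∂((volume : Measure (Sp N)).prod volume) := by
    intro G hG
    rw [hI k₁ hk₁ _ _ hG hG.compl, hI k₂ hk₂ _ _ hG hG, ← lintegral_add_left]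
    exact (hk₁.comp (measurable_fst.sub measurable_snd)).indicator (hG.prod hG.compl)
  rw [hJ F hF]
  have e : (fun n => IE k₁ (E n) (E n)ᶜ + IE k₂ (E n) (E n)) =
      fun n => ∫⁻ p, f (E n) p ∂((volume : Measure (Sp N)).prod volume) := by
    ext n; exact hJ _ (hE n)
  rw [e]
  refine le_trans ?_ (lintegral_liminf_le fun n => hf _ (hE n))
  refine lintegral_mono_ae ?_
  have h1 := Measure.quasiMeasurePreserving_fst (μ := (volume : Measure (Sp N)))
    (ν := (volume : Measure (Sp N))) |>.ae h
  have h2 := Measure.quasiMeasurePreserving_snd (μ := (volume : Measure (Sp N)))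
    (ν := (volume : Measure (Sp N))) |>.ae h
  filter_upwards [h1, h2] with p hp1 hp2
  have : ∀ᶠ n in atTop, f (E n) p = f F p := by
    filter_upwards [hp1, hp2] with n hn1 hn2
    simp only [f, Set.indicator, Set.mem_prod, Set.mem_compl_iff, hn1, hn2]
  rw [Filter.liminf_congr this]
  simp

end lsc

section tight
variable {N : ℕ}

lemma nonvanish {E : Set (Sp N)} (hm : MeasurableSet E) {t m C ρ : ℝ} (ht0 : 0 < t)
    (hm0 : 0 < m) (hv : volume E = ENNReal.ofReal m) (hρ : 0 < ρ)
    (hC : fracPer N t E ≤ ENNReal.ofReal C) (h : C < ρ ^ (-t) * om N / 2 * m) :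
    ∃ x, ENNReal.ofReal (ρ ^ N * om N / 2) < volume (E ∩ Metric.ball x ρ) := by
  by_contra hcon
  push Not at hcon
  have hom := om_pos (N := N)
  have h1 := near_low hm ht0 hρ hcon
  have h2 : IE (nearK N t ρ) E Eᶜ ≤ fracPer N t E := IE_mono (nearK_le t ρ) le_rfl le_rfl
  have h3 := h1.trans (h2.trans hC)
  rw [hv, ← ENNReal.ofReal_mul (by positivity)] at h3
  have h4 : 0 < ρ ^ (-t) * om N / 2 * m := by positivity
  rcases le_or_gt C 0 with hC0 | hC0
  · rw [ENNReal.ofReal_of_nonpos hC0, nonpos_iff_eq_zero, ENNReal.ofReal_eq_zero] at h3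
    linarith
  · rw [ENNReal.ofReal_le_ofReal_iff hC0.le] at h3
    linarith

lemma scale_low (hN : 1 ≤ N) {s t m μ e : ℝ} (hs : 0 < s) (hst : s < t)
    (hm0 : 0 < m) (hμ : 0 < μ) (hμm : μ ≤ m)
    (he : ∀ E : Set (Sp N), MeasurableSet E → volume E = ENNReal.ofReal m → fracPer N t E < ⊤ →
      e ≤ freeEnergy N s t E)
    {E : Set (Sp N)} (hm : MeasurableSet E) (hv : volume E = ENNReal.ofReal μ)
    (hfin : fracPer N t E < ⊤) :
    e * (μ / m) ^ ((N - t) / N) ≤ freeEnergy N s t E := by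
  have hNr : (1:ℝ) ≤ N := by exact_mod_cast hN
  have hN0 : (0:ℝ) < N := by linarith
  set q : ℝ := m / μ
  have hq0 : 0 < q := by positivity
  have hq1 : 1 ≤ q := (one_le_div hμ).2 hμm
  set r : ℝ := q ^ (1 / (N:ℝ)) with hr
  have hr1 : 1 ≤ r := Real.one_le_rpow hq1 (by positivity)
  have hr0 : 0 < r := by linarith
  have hrN : r ^ N = q := by
    rw [hr, ← Real.rpow_natCast, ← Real.rpow_mul hq0.le, one_div_mul_cancel hN0.ne', Real.rpow_one]
  have h := he ((r⁻¹ • ·) ⁻¹' E) ((measurable_const_smul r⁻¹) hm)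
    (by rw [vol_scale hr0, hrN, hv, ← ENNReal.ofReal_mul hq0.le, div_mul_cancel₀ _ hμ.ne'])
    (by rw [fracPer_scale t hm hr0]; exact ENNReal.mul_lt_top ENNReal.ofReal_lt_top hfin)
  unfold freeEnergy at h ⊢
  rw [fracPer_scale t hm hr0, fracPer_scale s hm hr0, ENNReal.toReal_mul, ENNReal.toReal_mul,
    ENNReal.toReal_ofReal (by positivity), ENNReal.toReal_ofReal (by positivity)] at h
  set a := (fracPer N t E).toReal
  set b := (fracPer N s E).toReal
  have hb : 0 ≤ b := ENNReal.toReal_nonneg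
  have h1 : r ^ ((N:ℝ) - t) ≤ r ^ ((N:ℝ) - s) :=
    Real.rpow_le_rpow_of_exponent_le hr1 (by linarith)
  have h2 : e ≤ r ^ ((N:ℝ) - t) * ((1 - t) * a - s * b) := by
    nlinarith [mul_le_mul_of_nonneg_right h1 (mul_nonneg hs.le hb)]
  have h3 : (μ / m) ^ (((N:ℝ) - t) / N) = (r ^ ((N:ℝ) - t))⁻¹ := by
    rw [hr, ← Real.rpow_mul hq0.le, ← Real.inv_rpow hq0.le]
    have : q⁻¹ = μ / m := by simp [q]
    rw [this]; congr 1; ring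
  rw [h3]
  have h4 : 0 < r ^ ((N:ℝ) - t) := by positivity
  rw [← div_eq_mul_inv, div_le_iff₀ h4]
  linarith

lemma tight_lem (hN : 1 ≤ N) {s t m e ρ c₀ : ℝ} (hs : 0 < s) (hst : s < t) (ht : t < 1)
    (hm0 : 0 < m) (he0 : 0 < e) (hc₀ : 0 < c₀)
    (he : ∀ E : Set (Sp N), MeasurableSet E → volume E = ENNReal.ofReal m → fracPer N t E < ⊤ →
      e ≤ freeEnergy N s t E)
    {E : ℕ → Set (Sp N)} (hm : ∀ n, MeasurableSet (E n)) (hv : ∀ n, volume (E n) = ENNReal.ofReal m)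
    (hfin : ∀ n, fracPer N t (E n) < ⊤)
    (hlim : Tendsto (fun n => freeEnergy N s t (E n)) atTop (𝓝 e))
    (hc : ∀ n, ENNReal.ofReal c₀ ≤ volume (E n ∩ Metric.ball 0 ρ)) {κ : ℝ} (hκ : 0 < κ) :
    ∃ R : ℝ, ∀ᶠ n in atTop, volume (E n \ Metric.ball 0 R) ≤ ENNReal.ofReal κ := by
  have hNr : (1:ℝ) ≤ N := by exact_mod_cast hN
  have hN0 : (0:ℝ) < N := by linarith
  set κ' := min κ c₀ / 2 with hκ'
  have hmin : 0 < min κ c₀ := lt_min hκ hc₀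
  have hκ'0 : 0 < κ' := by positivity
  have hκ'κ : κ' ≤ κ := by have := min_le_left κ c₀; linarith
  have hκ'c : κ' < c₀ := by have := min_le_right κ c₀; linarith
  have hcm : c₀ ≤ m := by
    have := (hc 0).trans ((measure_mono Set.inter_subset_left).trans (hv 0).le)
    rwa [ENNReal.ofReal_le_ofReal_iff hm0.le] at this
  set θ := (m - κ') / m with hθ
  have hθ0 : 0 < θ := div_pos (by linarith) hm0
  have hθ1 : θ < 1 := by rw [hθ, div_lt_one hm0]; linarith
  have hθm : θ * m = m - κ' := by rw [hθ]; field_simp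
  set p : ℝ := (N - t) / N with hp
  have hp1 : p < 1 := by rw [hp, div_lt_one hN0]; linarith
  have hp0 : 0 < p := div_pos (by linarith) hN0
  have hg1 : 1 < θ ^ (p - 1) := Real.one_lt_rpow_of_pos_of_lt_one_of_neg hθ0 hθ1 (by linarith)
  set g := e * (θ ^ (p - 1) - 1) with hg
  have hg0 : 0 < g := mul_pos he0 (by linarith)
  have hK := near_int (N := N) (t := t) (r := rr s t) hN ht
  set K := (∫⁻ z : Sp N, ENNReal.ofReal ‖z‖ * nearK N t (rr s t) z) with hKdef
  set L := 8 * (K.toReal * m + 1) / g with hL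
  have hKr : 0 ≤ K.toReal := ENNReal.toReal_nonneg
  have hL0 : 0 < L := by positivity
  refine ⟨ρ + L, ?_⟩
  have hev : ∀ᶠ n in atTop, freeEnergy N s t (E n) < e + g / 2 :=
    hlim.eventually (gt_mem_nhds (by linarith))
  filter_upwards [hev] with n hn
  obtain ⟨R, hR, hcut⟩ := cut_lem (nearK_meas (N := N) t (rr s t)) (hm n) ρ hL0
  set A := E n ∩ Metric.ball 0 R with hA
  set B := E n \ Metric.ball 0 R with hB
  have hmA : MeasurableSet A := (hm n).inter measurableSet_ball
  have hmB : MeasurableSet B := (hm n).diff measurableSet_ball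
  have hvn : volume (E n) ≠ ⊤ := by rw [hv]; simp
  rw [← hKdef, hv n] at hcut
  have hIfin : IE (nearK N t (rr s t)) A B < ⊤ := by
    have h1 : IE (nearK N t (rr s t)) A B * ENNReal.ofReal L < ⊤ :=
      lt_of_le_of_lt hcut (ENNReal.mul_lt_top hK ENNReal.ofReal_lt_top)
    by_contra hcon
    rw [not_lt, top_le_iff] at hcon
    rw [hcon, ENNReal.top_mul (by simpa using hL0)] at h1
    exact absurd h1 (lt_irrefl _)
  obtain ⟨hfA, hfB⟩ := per_split_fin hN (hs.trans hst) (rr_pos hs ht) (hm n) measurableSet_ball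
    hvn (hfin n) hIfin
  have hI : (IE (nearK N t (rr s t)) A B).toReal ≤ g / 8 := by
    have h1 := ENNReal.toReal_mono (ENNReal.mul_ne_top hK.ne ENNReal.ofReal_ne_top) hcut
    rw [ENNReal.toReal_mul, ENNReal.toReal_mul, ENNReal.toReal_ofReal hL0.le,
      ENNReal.toReal_ofReal hm0.le, ← le_div_iff₀ hL0] at h1
    refine h1.trans ?_
    rw [hL, div_div_eq_mul_div, div_le_iff₀ (by positivity)]
    nlinarith
  have hvA : volume A ≠ ⊤ := ne_top_of_le_ne_top hvn (measure_mono Set.inter_subset_left)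
  have hvB : volume B ≠ ⊤ := ne_top_of_le_ne_top hvn (measure_mono Set.sdiff_subset)
  set m₁ := (volume A).toReal with hm₁
  set m₂ := (volume B).toReal with hm₂
  have hA1 : volume A = ENNReal.ofReal m₁ := (ENNReal.ofReal_toReal hvA).symm
  have hB1 : volume B = ENNReal.ofReal m₂ := (ENNReal.ofReal_toReal hvB).symm
  have hm₂0 : 0 ≤ m₂ := ENNReal.toReal_nonneg
  have hsum : m₁ + m₂ = m := by
    rw [hm₁, hm₂, ← ENNReal.toReal_add hvA hvB, hA, hB,
      measure_inter_add_sdiff _ measurableSet_ball, hv, ENNReal.toReal_ofReal hm0.le]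
  have hm₁c : c₀ ≤ m₁ := by
    have h1 : ENNReal.ofReal c₀ ≤ ENNReal.ofReal m₁ := by
      rw [← hA1]
      refine (hc n).trans (measure_mono ?_)
      exact Set.inter_subset_inter_right _ (Metric.ball_subset_ball hR.1.le)
    rwa [ENNReal.ofReal_le_ofReal_iff ENNReal.toReal_nonneg] at h1
  -- energies
  obtain ⟨jA, eA⟩ := JJ_free hN hs hst ht ENNReal.toReal_nonneg hmA hA1 hfA
  obtain ⟨jB, eB⟩ := JJ_free hN hs hst ht ENNReal.toReal_nonneg hmB hB1 hfB
  obtain ⟨jE, eE⟩ := JJ_free hN hs hst ht hm0.le (hm n) (hv n) (hfin n)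
  have hsp : JJ N s t A + JJ N s t B ≤ JJ N s t (E n) + 2 * IE (nearK N t (rr s t)) A B := by
    refine (JJ_split (s := s) (t := t) (hm n) measurableSet_ball).trans ?_
    gcongr
    exact IE_mono (kp_le hs hst ht) le_rfl le_rfl
  have hspr : (JJ N s t A).toReal + (JJ N s t B).toReal ≤ (JJ N s t (E n)).toReal + 2 * (g / 8) := by
    have h2 : 2 * IE (nearK N t (rr s t)) A B ≠ ⊤ := ENNReal.mul_ne_top (by simp) hIfin.ne
    have h1 := ENNReal.toReal_mono (ENNReal.add_ne_top.2 ⟨jE.ne, h2⟩) hsp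
    rw [ENNReal.toReal_add jA.ne jB.ne, ENNReal.toReal_add jE.ne h2, ENNReal.toReal_mul,
      ENNReal.toReal_ofNat] at h1
    linarith
  have hF : freeEnergy N s t A + freeEnergy N s t B < e + g := by
    have : (∫⁻ z, km N s t z).toReal * m₁ + (∫⁻ z, km N s t z).toReal * m₂ =
      (∫⁻ z, km N s t z).toReal * m := by rw [← mul_add, hsum]
    linarith
  have hm₂κ : m₂ ≤ κ' := by
    by_contra hcon
    push Not at hcon
    have hlow : ∀ x : ℝ, 0 < x → x ≤ m - κ' → e * (x / m) * θ ^ (p - 1) ≤ e * (x / m) ^ p := by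
      intro x hx0 hx
      have hxm : 0 < x / m := by positivity
      have hxθ : x / m ≤ θ := by rw [hθ]; gcongr
      have h1 : (x / m) ^ p = (x / m) * (x / m) ^ (p - 1) := by
        nth_rewrite 2 [← Real.rpow_one (x / m)]
        rw [← Real.rpow_add hxm]; congr 1; ring
      rw [h1, ← mul_assoc]
      gcongr 1
      exact Real.rpow_le_rpow_of_nonpos hxm hxθ (by linarith)
    have lA := scale_low hN hs hst hm0 (by linarith) (by linarith) he hmA hA1 hfA
    have lB := scale_low hN hs hst hm0 (by linarith) (by linarith) he hmB hB1 hfB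
    have kA := hlow m₁ (by linarith) (by linarith)
    have kB := hlow m₂ (by linarith) (by linarith)
    have : e * (m₁ / m) * θ ^ (p - 1) + e * (m₂ / m) * θ ^ (p - 1) = e * θ ^ (p - 1) := by
      have : m₁ / m + m₂ / m = 1 := by rw [← add_div, hsum, div_self hm0.ne']
      calc _ = e * (m₁ / m + m₂ / m) * θ ^ (p - 1) := by ring
        _ = _ := by rw [this, mul_one]
    have hgg : g = e * θ ^ (p - 1) - e := by rw [hg]; ring
    linarith
  calc volume (E n \ Metric.ball 0 (ρ + L)) ≤ volume B :=
        measure_mono (Set.sdiff_subset_sdiff_right (Metric.ball_subset_ball hR.2.le))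
    _ = ENNReal.ofReal m₂ := hB1
    _ ≤ _ := ENNReal.ofReal_le_ofReal (by linarith)

end tight

end partP5


section partP6
open MeasureTheory ENNReal Filter Topology

section cpt
variable {N : ℕ}

lemma weak_sub {E : ℕ → Set (Sp N)} {m : ℝ} (hE : ∀ n, MeasurableSet (E n)) (hm : 0 ≤ m)
    (hv : ∀ n, volume (E n) = ENNReal.ofReal m) :
    ∃ φ : ℕ → ℕ, StrictMono φ ∧ ∃ V : Sp N → ℝ → ℝ, ∀ x ρ,
      Tendsto (fun n => volume.real (E (φ n) ∩ Metric.ball x ρ)) atTop (𝓝 (V x ρ)) := by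
  have hf : ∀ n, volume (E n) ≠ ⊤ := fun n => by rw [hv]; simp
  have : Fact ((1:ℝ≥0∞) ≤ 2) := ⟨by norm_num⟩
  have : Fact ((2:ℝ≥0∞) ≠ ⊤) := ⟨by norm_num⟩
  let u : ℕ → Lp ℝ 2 (volume : Measure (Sp N)) := fun n => indicatorConstLp 2 (hE n) (hf n) (1:ℝ)
  let f : ℕ → WeakDual ℝ (Lp ℝ 2 (volume : Measure (Sp N))) :=
    fun n => StrongDual.toWeakDual (innerSL ℝ (u n))
  have hb : ∀ n, f n ∈ WeakDual.toStrongDual ⁻¹' Metric.closedBall (0 : StrongDual ℝ (Lp ℝ 2 (volume : Measure (Sp N)))) (m ^ (1/2:ℝ)) := by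
    intro n
    have : ‖u n‖ = m ^ (1/2:ℝ) := by
      rw [norm_indicatorConstLp (by norm_num) (by norm_num)]
      simp [measureReal_def, hv, ENNReal.toReal_ofReal hm]
    simp only [Set.mem_preimage, Metric.mem_closedBall, dist_zero_right]
    rw [← this]
    exact (innerSL_apply_norm (𝕜 := ℝ) (u n)).le
  obtain ⟨g, -, φ, hφ, hg⟩ := WeakDual.isSeqCompact_closedBall (𝕜 := ℝ) (E := Lp ℝ 2 (volume : Measure (Sp N))) 0 (m ^ (1/2:ℝ)) hb
  have hfb : ∀ (x : Sp N) ρ, volume (Metric.ball x ρ) ≠ ⊤ := fun x ρ => measure_ball_lt_top.ne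
  refine ⟨φ, hφ, fun x ρ => g (indicatorConstLp 2 Metric.isOpen_ball.measurableSet (hfb x ρ) (1:ℝ)), fun x ρ => ?_⟩
  have := (WeakDual.eval_continuous (𝕜 := ℝ) (indicatorConstLp 2 Metric.isOpen_ball.measurableSet (hfb x ρ) (1:ℝ))).continuousAt.tendsto.comp hg
  refine this.congr fun n => ?_
  exact L2.real_inner_indicatorConstLp_one_indicatorConstLp_one (hE (φ n)) Metric.isOpen_ball.measurableSet (hf _) (hfb x ρ)

/-- From Cauchy in measure to a.e. convergent subsequence. -/
lemma cauchy_sub {E : ℕ → Set (Sp N)} {m : ℝ} (hE : ∀ n, MeasurableSet (E n)) 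
    (hv : ∀ n, volume (E n) = ENNReal.ofReal m)
    (hc : ∀ ε : ℝ, 0 < ε → ∃ n0, ∀ n ≥ n0, ∀ k ≥ n0, volume (symmDiff (E n) (E k)) ≤ ENNReal.ofReal ε) :
    ∃ φ : ℕ → ℕ, StrictMono φ ∧ ∃ F : Set (Sp N), MeasurableSet F ∧ volume F = ENNReal.ofReal m ∧
      ∀ᵐ x, ∀ᶠ n in atTop, (x ∈ E (φ n) ↔ x ∈ F) := by
  obtain ⟨φ, hφ, hP⟩ := extraction_forall_of_eventually' (P := fun j n => ∀ k ≥ n,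
    volume (symmDiff (E n) (E k)) ≤ ENNReal.ofReal ((1/2:ℝ)^j)) (fun j => by
      obtain ⟨n0, h⟩ := hc ((1/2:ℝ)^j) (by positivity)
      exact ⟨n0, fun n hn k hk => h n hn k (le_trans hn hk)⟩)
  have hD : ∀ j, volume (symmDiff (E (φ j)) (E (φ (j+1)))) ≤ ENNReal.ofReal ((1/2:ℝ)^j) :=
    fun j => hP j _ (hφ.monotone (Nat.le_succ j))
  have hsum : Summable fun j : ℕ => (1/2:ℝ)^j := summable_geometric_two
  have hfin : ∑' j, volume (symmDiff (E (φ j)) (E (φ (j+1)))) ≠ ⊤ := by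
    refine ne_top_of_le_ne_top ?_ (ENNReal.tsum_le_tsum hD)
    rw [← ENNReal.ofReal_tsum_of_nonneg (fun j => by positivity) hsum]; simp
  let F : Set (Sp N) := {x | ∀ᶠ j in atTop, x ∈ E (φ j)}
  have hFe : F = ⋃ n, ⋂ k, E (φ (n + k)) := by
    ext x; simp only [F, Set.mem_ofPred_eq, eventually_atTop, Set.mem_iUnion, Set.mem_iInter]
    constructor
    · rintro ⟨a, h⟩; exact ⟨a, fun k => h _ (by omega)⟩
    · rintro ⟨a, h⟩; exact ⟨a, fun b hb => by have := h (b - a); rwa [Nat.add_sub_cancel' hb] at this⟩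
  have hF : MeasurableSet F := by
    rw [hFe]; exact MeasurableSet.iUnion fun n => MeasurableSet.iInter fun k => hE _
  have hae : ∀ᵐ x, ∀ᶠ n in atTop, (x ∈ E (φ n) ↔ x ∈ F) := by
    filter_upwards [ae_eventually_notMem hfin] with x hx
    obtain ⟨a, ha⟩ := eventually_atTop.1 hx
    have hst : ∀ k, (x ∈ E (φ (a + k)) ↔ x ∈ E (φ a)) := by
      intro k
      induction k with
      | zero => rfl
      | succ k ih =>
        have := ha (a + k) (by omega)
        rw [Set.mem_symmDiff] at this
        rw [← ih, ← add_assoc]; tauto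
    have hst' : ∀ b ≥ a, (x ∈ E (φ b) ↔ x ∈ E (φ a)) := fun b hb => by
      have := hst (b - a); rwa [Nat.add_sub_cancel' hb] at this
    have hxF : x ∈ F ↔ x ∈ E (φ a) := by
      constructor
      · intro h
        obtain ⟨b, hb⟩ := eventually_atTop.1 h
        exact (hst' (max a b) (le_max_left _ _)).1 (hb _ (le_max_right _ _))
      · intro h
        exact eventually_atTop.2 ⟨a, fun b hb => (hst' b hb).2 h⟩
    exact eventually_atTop.2 ⟨a, fun b hb => by rw [hst' b hb, hxF]⟩
  refine ⟨φ, hφ, F, hF, ?_, hae⟩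
  -- volume
  have htail : Tendsto (fun j => ∑' k, volume (symmDiff (E (φ (k + j))) (E (φ (k + j + 1))))) atTop (𝓝 0) :=
    ENNReal.tendsto_sum_nat_add _ hfin
  have hsub : ∀ j, volume (symmDiff (E (φ j)) F) ≤ ∑' k, volume (symmDiff (E (φ (k + j))) (E (φ (k + j + 1)))) := by
    intro j
    refine le_trans ?_ (measure_iUnion_le _)
    apply measure_mono_ae
    filter_upwards [hae] with x hx hxj
    by_contra hcon
    have hcon : x ∉ ⋃ k, symmDiff (E (φ (k + j))) (E (φ (k + j + 1))) := hcon
    have hxj : x ∈ symmDiff (E (φ j)) F := hxj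
    simp only [Set.mem_iUnion, not_exists] at hcon
    have hst : ∀ k, (x ∈ E (φ (k + j)) ↔ x ∈ E (φ j)) := by
      intro k
      induction k with
      | zero => simp
      | succ k ih =>
        have := hcon k
        rw [Set.mem_symmDiff] at this
        rw [← ih, show k + 1 + j = k + j + 1 by omega]; tauto
    obtain ⟨b, hb⟩ := eventually_atTop.1 hx
    have h1 := hb (b + j) (by omega)
    rw [hst b] at h1
    rw [Set.mem_symmDiff] at hxj; tauto
  have hlim : Tendsto (fun j => volume (symmDiff (E (φ j)) F)) atTop (𝓝 0) :=
    tendsto_of_tendsto_of_tendsto_of_le_of_le tendsto_const_nhds htail (fun _ => zero_le) hsub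
  apply le_antisymm
  · have h1 : ∀ j, volume F ≤ ENNReal.ofReal m + volume (symmDiff (E (φ j)) F) := fun j => by
      rw [← hv (φ j)]
      refine le_trans (measure_mono ?_) (measure_union_le _ _)
      intro x hx; by_cases h : x ∈ E (φ j)
      · exact Or.inl h
      · exact Or.inr (Or.inr ⟨hx, h⟩)
    have := hlim.const_add (ENNReal.ofReal m)
    rw [add_zero] at this
    exact ge_of_tendsto' this h1
  · have h1 : ∀ j, ENNReal.ofReal m ≤ volume F + volume (symmDiff (E (φ j)) F) := fun j => by
      rw [← hv (φ j)]
      refine le_trans (measure_mono ?_) (measure_union_le _ _)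
      intro x hx; by_cases h : x ∈ F
      · exact Or.inl h
      · exact Or.inr (Or.inl ⟨hx, h⟩)
    have := hlim.const_add (volume F)
    rw [add_zero] at this
    exact ge_of_tendsto' this h1

end cpt

end partP6


section partP6b
open MeasureTheory ENNReal Filter Topology

section cpt2
variable {N : ℕ}

noncomputable def bk (N : ℕ) (ρ : ℝ) : Sp N → ℝ≥0∞ := (Metric.ball 0 ρ).indicator 1

lemma bk_meas (ρ : ℝ) : Measurable (bk N ρ) :=
  measurable_one.indicator Metric.isOpen_ball.measurableSet

lemma bk_even (ρ : ℝ) (z : Sp N) : bk N ρ (-z) = bk N ρ z := by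
  classical
  simp [bk, Set.indicator_apply]

lemma bk_inner (ρ : ℝ) (A : Set (Sp N)) (x : Sp N) :
    ∫⁻ y in A, bk N ρ (x - y) = volume (A ∩ Metric.ball x ρ) := by
  have : (fun y => bk N ρ (x - y)) = (Metric.ball x ρ).indicator 1 := by
    classical
    ext y
    simp only [bk, Set.indicator_apply, Metric.mem_ball, dist_eq_norm, norm_sub_rev y x, sub_zero, Pi.one_apply]
  rw [this, lintegral_indicator_one Metric.isOpen_ball.measurableSet,
    Measure.restrict_apply Metric.isOpen_ball.measurableSet, Set.inter_comm]

lemma bk_IE_le {t ρ C : ℝ} (ht : 0 < t) (hρ : 0 < ρ) {E : Set (Sp N)} (hE : MeasurableSet E)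
    (hC : fracPer N t E ≤ ENNReal.ofReal C) :
    IE (bk N ρ) E Eᶜ ≤ ENNReal.ofReal (ρ ^ ((N:ℝ) + t)) * ENNReal.ofReal C := by
  refine le_trans ?_ (mul_le_mul_right hC _)
  rw [fracPer_eq, ← IE_const_mul (KK_meas t)]
  unfold IE
  refine setLIntegral_mono' hE fun x hx => setLIntegral_mono' hE.compl fun y hy => ?_
  have hne : x - y ≠ 0 := sub_ne_zero.2 (fun h => hy (h ▸ hx))
  have hz : 0 < ‖x - y‖ := norm_pos_iff.2 hne
  classical
  unfold bk KK
  rw [Set.indicator_apply]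
  split_ifs with h
  · rw [Metric.mem_ball, dist_zero_right] at h
    beta_reduce
    rw [← ENNReal.ofReal_mul (by positivity), Pi.one_apply, ← ENNReal.ofReal_one]
    apply ENNReal.ofReal_le_ofReal
    rw [Real.rpow_neg hz.le, ← div_eq_mul_inv, one_le_div (by positivity)]
    exact Real.rpow_le_rpow hz.le h.le (by positivity)
  · exact zero_le

lemma diff_bound {ρ : ℝ} {A B K : Set (Sp N)} (hA : MeasurableSet A)
    (hB : MeasurableSet B) (hK : MeasurableSet K) :
    volume (Metric.ball (0 : Sp N) ρ) * volume ((A \ B) ∩ K) ≤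
      IE (bk N ρ) A Aᶜ + IE (bk N ρ) B Bᶜ +
        ∫⁻ x in K, ENNReal.ofReal |volume.real (A ∩ Metric.ball x ρ) - volume.real (B ∩ Metric.ball x ρ)| := by
  have hf : ∀ (D : Set (Sp N)) x, volume (D ∩ Metric.ball x ρ) ≠ ⊤ := fun D x =>
    ne_top_of_le_ne_top measure_ball_lt_top.ne (measure_mono Set.inter_subset_right)
  rw [← setLIntegral_const]
  have hS : MeasurableSet ((A \ B) ∩ K) := (hA.diff hB).inter hK
  have hmA := IE_inner_meas (bk_meas (N := N) ρ) Aᶜ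
  have hmB := IE_inner_meas (bk_meas (N := N) ρ) B
  calc ∫⁻ x in (A \ B) ∩ K, volume (Metric.ball (0 : Sp N) ρ)
      ≤ ∫⁻ x in (A \ B) ∩ K, ((∫⁻ y in Aᶜ, bk N ρ (x - y)) + (∫⁻ y in B, bk N ρ (x - y)) +
        ENNReal.ofReal |volume.real (A ∩ Metric.ball x ρ) - volume.real (B ∩ Metric.ball x ρ)|) := by
        refine lintegral_mono fun x => ?_
        rw [bk_inner, bk_inner]
        have h1 : volume (Metric.ball (0 : Sp N) ρ) = volume (A ∩ Metric.ball x ρ) + volume (Aᶜ ∩ Metric.ball x ρ) := by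
          rw [← Measure.addHaar_ball_center volume x ρ, Set.inter_comm A, Set.inter_comm Aᶜ, ← Set.sdiff_eq,
            measure_inter_add_sdiff _ hA]
        have h2 : volume (A ∩ Metric.ball x ρ) ≤ volume (B ∩ Metric.ball x ρ) + 
          ENNReal.ofReal |volume.real (A ∩ Metric.ball x ρ) - volume.real (B ∩ Metric.ball x ρ)| := by
          rw [← ENNReal.ofReal_toReal (hf A x), ← ENNReal.ofReal_toReal (hf B x), ← ENNReal.ofReal_add (by positivity) (by positivity)]
          apply ENNReal.ofReal_le_ofReal
          have := le_abs_self (volume.real (A ∩ Metric.ball x ρ) - volume.real (B ∩ Metric.ball x ρ))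
          simp only [measureReal_def] at *
          linarith
        rw [h1, add_comm (volume (A ∩ _)), add_assoc]
        exact add_le_add_right h2 _
    _ = (∫⁻ x in (A \ B) ∩ K, ∫⁻ y in Aᶜ, bk N ρ (x - y)) + (∫⁻ x in (A \ B) ∩ K, ∫⁻ y in B, bk N ρ (x - y)) +
        ∫⁻ x in (A \ B) ∩ K, ENNReal.ofReal |volume.real (A ∩ Metric.ball x ρ) - volume.real (B ∩ Metric.ball x ρ)| := by
        rw [lintegral_add_left (by exact hmA.add hmB), lintegral_add_left hmA]
    _ ≤ _ := by
        rw [IE_comm (bk_meas ρ) (bk_even ρ) B Bᶜ]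
        refine add_le_add (add_le_add ?_ ?_) ?_
        · exact lintegral_mono_set fun x hx => hx.1.1
        · exact lintegral_mono_set fun x hx => hx.1.2
        · exact lintegral_mono_set fun x hx => hx.2

lemma vol_cauchy {E : ℕ → Set (Sp N)} {V : Sp N → ℝ} {ρ R : ℝ} 
    (h : ∀ x, Tendsto (fun n => volume.real (E n ∩ Metric.ball x ρ)) atTop (𝓝 (V x))) :
    Tendsto (fun p : ℕ × ℕ => ∫⁻ x in Metric.ball (0:Sp N) R, 
      ENNReal.ofReal |volume.real (E p.1 ∩ Metric.ball x ρ) - volume.real (E p.2 ∩ Metric.ball x ρ)|)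
      atTop (𝓝 0) := by
  have hm : ∀ n, Measurable fun x => volume.real (E n ∩ Metric.ball x ρ) := fun n => by
    have := (IE_inner_meas (bk_meas (N := N) ρ) (E n)).ennreal_toReal
    simpa only [bk_inner, measureReal_def] using this
  have hle : ∀ n x, volume.real (E n ∩ Metric.ball x ρ) ≤ volume.real (Metric.ball (0:Sp N) ρ) := fun n x => by
    rw [measureReal_def (s := Metric.ball (0:Sp N) ρ), ← Measure.addHaar_ball_center volume x ρ]
    exact ENNReal.toReal_mono measure_ball_lt_top.ne (measure_mono Set.inter_subset_right)
  have key := tendsto_lintegral_filter_of_dominated_convergence (μ := volume.restrict (Metric.ball (0:Sp N) R))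
    (l := (atTop : Filter (ℕ × ℕ)))
    (F := fun p x => ENNReal.ofReal |volume.real (E p.1 ∩ Metric.ball x ρ) - volume.real (E p.2 ∩ Metric.ball x ρ)|)
    (f := fun _ => 0) (fun _ => ENNReal.ofReal (volume.real (Metric.ball (0:Sp N) ρ)))
    (Eventually.of_forall fun p => ((hm p.1).sub (hm p.2)).abs.ennreal_ofReal)
    (Eventually.of_forall fun p => Eventually.of_forall fun x => ?_) ?_ 
    (Eventually.of_forall fun x => ?_)
  · simpa using key
  · apply ENNReal.ofReal_le_ofReal
    rw [abs_le]
    have h1 := hle p.1 x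
    have h2 := hle p.2 x
    have h3 : 0 ≤ volume.real (E p.1 ∩ Metric.ball x ρ) := measureReal_nonneg
    have h4 : 0 ≤ volume.real (E p.2 ∩ Metric.ball x ρ) := measureReal_nonneg
    constructor <;> linarith
  · rw [setLIntegral_const]
    exact ENNReal.mul_ne_top (by simp) measure_ball_lt_top.ne
  · have h1 : Tendsto (fun p : ℕ × ℕ => volume.real (E p.1 ∩ Metric.ball x ρ)) atTop (𝓝 (V x)) := by
      rw [← prod_atTop_atTop_eq]; exact (h x).comp tendsto_fst
    have h2 : Tendsto (fun p : ℕ × ℕ => volume.real (E p.2 ∩ Metric.ball x ρ)) atTop (𝓝 (V x)) := by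
      rw [← prod_atTop_atTop_eq]; exact (h x).comp tendsto_snd
    have := ENNReal.tendsto_ofReal (h1.sub h2).abs
    simpa using this

lemma cauchy_lem {E : ℕ → Set (Sp N)} {t C : ℝ} (hE : ∀ n, MeasurableSet (E n)) (ht : 0 < t)
    (hC0 : 0 < C) (hC : ∀ n, fracPer N t (E n) ≤ ENNReal.ofReal C)
    (htight : ∀ κ : ℝ, 0 < κ → ∃ R : ℝ, ∀ᶠ n in atTop, volume (E n \ Metric.ball 0 R) ≤ ENNReal.ofReal κ)
    {V : Sp N → ℝ → ℝ} (hV : ∀ x ρ,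
      Tendsto (fun n => volume.real (E n ∩ Metric.ball x ρ)) atTop (𝓝 (V x ρ)))
    (ε : ℝ) (hε : 0 < ε) :
    ∃ n0, ∀ n ≥ n0, ∀ k ≥ n0, volume (symmDiff (E n) (E k)) ≤ ENNReal.ofReal ε := by
  have hom := om_pos (N := N)
  obtain ⟨R, hR⟩ := htight (ε / 4) (by positivity)
  obtain ⟨ρ, hρ, hρt⟩ : ∃ ρ : ℝ, 0 < ρ ∧ ρ ^ t = ε * om N / (16 * C) :=
    ⟨(ε * om N / (16 * C)) ^ t⁻¹, by positivity, by
      rw [← Real.rpow_mul (by positivity), inv_mul_cancel₀ ht.ne', Real.rpow_one]⟩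
  have hG := vol_cauchy (R := R) (fun x => hV x ρ)
  have hb : 0 < ρ ^ N * om N := by positivity
  have hev := hG.eventually_le_const (u := ENNReal.ofReal (ρ ^ N * om N * (ε / 8)))
    (ENNReal.ofReal_pos.2 (by positivity))
  obtain ⟨⟨a, b⟩, hab⟩ := eventually_atTop.1 hev
  obtain ⟨n1, hn1⟩ := eventually_atTop.1 hR
  have main : ∀ n ≥ max (max a b) n1, ∀ k ≥ max (max a b) n1, volume (E n \ E k) ≤ ENNReal.ofReal (ε / 2) := by
    intro n hn k hk
    simp only [ge_iff_le, max_le_iff] at hn hk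
    have h1 := diff_bound (ρ := ρ) (hE n) (hE k) (Metric.isOpen_ball (x := (0:Sp N)) (ε := R)).measurableSet
    have h2 := bk_IE_le ht hρ (hE n) (hC n)
    have h3 := bk_IE_le ht hρ (hE k) (hC k)
    have h4 := hab (n, k) ⟨hn.1.1, hk.1.2⟩
    have h5 := h1.trans (add_le_add (add_le_add h2 h3) h4)
    rw [vol_ball _ hρ, ← ENNReal.ofReal_mul (by positivity), ← ENNReal.ofReal_add (by positivity) (by positivity),
      ← ENNReal.ofReal_add (by positivity) (by positivity),
      Real.rpow_add hρ, Real.rpow_natCast, hρt,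
      show ρ ^ N * (ε * om N / (16 * C)) * C + ρ ^ N * (ε * om N / (16 * C)) * C + ρ ^ N * om N * (ε / 8)
        = (ρ ^ N * om N) * (ε / 4) by field_simp; ring, ENNReal.ofReal_mul hb.le (q := ε / 4)] at h5
    have h6 := (ENNReal.mul_le_mul_iff_right (ENNReal.ofReal_pos.2 hb).ne' ENNReal.ofReal_ne_top).1 h5
    rw [← measure_inter_add_sdiff (E n \ E k) (Metric.isOpen_ball (x := (0:Sp N)) (ε := R)).measurableSet,
      show ε / 2 = ε / 4 + ε / 4 by ring, ENNReal.ofReal_add (by positivity) (by positivity)]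
    refine add_le_add h6 (le_trans (measure_mono ?_) (hn1 n hn.2))
    exact fun x hx => ⟨hx.1.1, hx.2⟩
  refine ⟨max (max a b) n1, fun n hn k hk => ?_⟩
  refine (measure_union_le _ _).trans ?_
  refine (add_le_add (main n hn k hk) (main k hk n hn)).trans ?_
  rw [← ENNReal.ofReal_add (by positivity) (by positivity)]
  apply ENNReal.ofReal_le_ofReal; linarith

lemma compactness {E : ℕ → Set (Sp N)} {t C m : ℝ} (hE : ∀ n, MeasurableSet (E n)) (ht : 0 < t)
    (hm : 0 ≤ m) (hv : ∀ n, volume (E n) = ENNReal.ofReal m)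
    (hC0 : 0 < C) (hC : ∀ n, fracPer N t (E n) ≤ ENNReal.ofReal C)
    (htight : ∀ κ : ℝ, 0 < κ → ∃ R : ℝ, ∀ᶠ n in atTop, volume (E n \ Metric.ball 0 R) ≤ ENNReal.ofReal κ) :
    ∃ φ : ℕ → ℕ, StrictMono φ ∧ ∃ F : Set (Sp N), MeasurableSet F ∧ volume F = ENNReal.ofReal m ∧
      ∀ᵐ x, ∀ᶠ n in atTop, (x ∈ E (φ n) ↔ x ∈ F) := by
  obtain ⟨φ, hφ, V, hV⟩ := weak_sub hE hm hv
  have hc := cauchy_lem (E := fun n => E (φ n)) (fun n => hE _) ht hC0 (fun n => hC _)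
    (fun κ hκ => by
      obtain ⟨R, hR⟩ := htight κ hκ
      exact ⟨R, hφ.tendsto_atTop.eventually hR⟩) hV
  obtain ⟨ψ, hψ, F, hF⟩ := cauchy_sub (E := fun n => E (φ n)) (fun n => hE _) (fun n => hv _) hc
  exact ⟨φ ∘ ψ, hφ.comp hψ, F, hF⟩

end cpt2

end partP6b


section partP7
open MeasureTheory ENNReal Filter Topology

section final
variable {N : ℕ}

lemma lower_bd (hN : 1 ≤ N) {s t c m : ℝ} (hs : 0 < s) (hst : s < t) (ht : t < 1) (hm : 0 < m)
    {E : Set (Sp N)} (hv : volume E = ENNReal.ofReal m) (hc : 0 < c)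
    (hfin : fracPer N t E < ⊤)
    (h1 : ENNReal.ofReal s * fracPer N s E ≤ ENNReal.ofReal ((1 - t) / 2) * fracPer N t E)
    (h2 : ENNReal.ofReal c * volume E ≤ ENNReal.ofReal (1 - t) * fracPer N t E) :
    (1 - t) / 2 * (fracPer N t E).toReal ≤ freeEnergy N s t E ∧ c * m / 2 ≤ freeEnergy N s t E := by
  have g1 := ENNReal.toReal_mono (ENNReal.mul_ne_top ENNReal.ofReal_ne_top hfin.ne) h1
  have g2 := ENNReal.toReal_mono (ENNReal.mul_ne_top ENNReal.ofReal_ne_top hfin.ne) h2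
  rw [ENNReal.toReal_mul, ENNReal.toReal_mul, ENNReal.toReal_ofReal hs.le,
    ENNReal.toReal_ofReal (by linarith)] at g1
  rw [hv, ENNReal.toReal_mul, ENNReal.toReal_mul, ENNReal.toReal_ofReal hc.le,
    ENNReal.toReal_ofReal hm.le, ENNReal.toReal_ofReal (by linarith)] at g2
  unfold freeEnergy
  constructor <;> linarith

lemma fracPer_translate (α : ℝ) {E : Set (Sp N)} (hE : MeasurableSet E) (v : Sp N) :
    fracPer N α ((· + v) ⁻¹' E) = fracPer N α E := by
  rw [fracPer_eq, fracPer_eq, ← Set.preimage_compl]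
  exact IE_translate (KK_meas α) hE hE.compl v

lemma main_exists (hN : 1 ≤ N) {s t c m : ℝ} (hs : 0 < s) (hst : s < t) (ht : t < 1) (hm : 0 < m)
    (hc : 0 < c)
    (hkey : ∀ E : Set (Sp N), MeasurableSet E → volume E = ENNReal.ofReal m → fracPer N t E < ⊤ →
      (1 - t) / 2 * (fracPer N t E).toReal ≤ freeEnergy N s t E ∧ c * m / 2 ≤ freeEnergy N s t E) :
    ∃ F : Set (Sp N), IsMinimizer N s t m F := by
  have ht0 : 0 < t := hs.trans hst
  have hom := om_pos (N := N)
  let S : Set ℝ := {v | ∃ E : Set (Sp N), MeasurableSet E ∧ volume E = ENNReal.ofReal m ∧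
    fracPer N t E < ⊤ ∧ freeEnergy N s t E = v}
  have hne : S.Nonempty := by
    obtain ⟨E, h1, h2, h3⟩ := exists_fin hN ht0 ht hm
    exact ⟨_, E, h1, h2, h3, rfl⟩
  have hlb : ∀ v ∈ S, c * m / 2 ≤ v := by
    rintro v ⟨E, h1, h2, h3, rfl⟩
    exact (hkey E h1 h2 h3).2
  have hbdd : BddBelow S := ⟨_, hlb⟩
  have he0 : 0 < sInf S := lt_of_lt_of_le (by positivity) (le_csInf hne hlb)
  have he : ∀ E : Set (Sp N), MeasurableSet E → volume E = ENNReal.ofReal m → fracPer N t E < ⊤ →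
      sInf S ≤ freeEnergy N s t E := fun E h1 h2 h3 => csInf_le hbdd ⟨E, h1, h2, h3, rfl⟩
  obtain ⟨u, -, hu, huS⟩ := exists_seq_tendsto_sInf hne hbdd
  choose E hEm hEv hEf hEu using huS
  obtain ⟨b, hb⟩ := hu.bddAbove_range
  have hub : ∀ n, u n ≤ b := fun n => hb ⟨n, rfl⟩
  have ht1 : 0 < 1 - t := by linarith
  have hb0 : 0 < b := by
    have := hlb (u 0) ⟨E 0, hEm 0, hEv 0, hEf 0, hEu 0⟩
    have h2 := hub 0
    have : 0 < c * m / 2 := by positivity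
    linarith
  set C : ℝ := 2 * b / (1 - t) with hCdef
  have hC0 : 0 < C := by positivity
  have hC : ∀ n, fracPer N t (E n) ≤ ENNReal.ofReal C := fun n => by
    rw [← ENNReal.ofReal_toReal (hEf n).ne]
    apply ENNReal.ofReal_le_ofReal
    have h1 := (hkey _ (hEm n) (hEv n) (hEf n)).1
    rw [hEu n] at h1
    rw [hCdef, le_div_iff₀ ht1]
    linarith [hub n]
  obtain ⟨ρ, hρ, hρt⟩ : ∃ ρ : ℝ, 0 < ρ ∧ ρ ^ (-t) = 4 * C / (om N * m) :=
    ⟨(4 * C / (om N * m)) ^ (-t)⁻¹, by positivity, by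
      rw [← Real.rpow_mul (by positivity), inv_mul_cancel₀ (by linarith), Real.rpow_one]⟩
  have hCρ : C < ρ ^ (-t) * om N / 2 * m := by
    rw [hρt, show 4 * C / (om N * m) * om N / 2 * m = 2 * C by field_simp; ring]
    linarith
  have hx := fun n => nonvanish (hEm n) ht0 hm (hEv n) hρ (hC n) hCρ
  choose x hx using hx
  let E' : ℕ → Set (Sp N) := fun n => (· + x n) ⁻¹' E n
  have hE'm : ∀ n, MeasurableSet (E' n) := fun n => (measurable_add_const (x n)) (hEm n)
  have hE'v : ∀ n, volume (E' n) = ENNReal.ofReal m := fun n => by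
    rw [← hEv n]; exact measure_preimage_add_right volume (x n) (E n)
  have hE'P : ∀ α n, fracPer N α (E' n) = fracPer N α (E n) := fun α n =>
    fracPer_translate α (hEm n) (x n)
  have hE'f : ∀ n, fracPer N t (E' n) < ⊤ := fun n => by rw [hE'P]; exact hEf n
  have hE'C : ∀ n, fracPer N t (E' n) ≤ ENNReal.ofReal C := fun n => by rw [hE'P]; exact hC n
  have hE'F : ∀ n, freeEnergy N s t (E' n) = u n := fun n => by
    rw [← hEu n]; unfold freeEnergy; rw [hE'P, hE'P]
  have hlim : Tendsto (fun n => freeEnergy N s t (E' n)) atTop (𝓝 (sInf S)) := by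
    simpa only [hE'F] using hu
  have hc' : ∀ n, ENNReal.ofReal (ρ ^ N * om N / 2) ≤ volume (E' n ∩ Metric.ball 0 ρ) := fun n => by
    have h1 : E' n ∩ Metric.ball 0 ρ = (· + x n) ⁻¹' (E n ∩ Metric.ball (x n) ρ) := by
      ext y; simp [E', Metric.mem_ball, dist_eq_norm]
    rw [h1, measure_preimage_add_right volume (x n)]
    exact (hx n).le
  have htight : ∀ κ : ℝ, 0 < κ → ∃ R : ℝ, ∀ᶠ n in atTop, volume (E' n \ Metric.ball 0 R) ≤ ENNReal.ofReal κ :=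
    fun κ hκ => tight_lem hN hs hst ht hm he0 (by positivity) he hE'm hE'v hE'f hlim hc' hκ
  obtain ⟨φ, hφ, F, hFm, hFv, hFae⟩ := compactness hE'm ht0 hm.le hE'v hC0 hE'C htight
  have hFf : fracPer N t F < ⊤ := by
    have h1 := lsc_lem (KK_meas (N := N) t) (measurable_const (a := (0:ℝ≥0∞))) (fun n => hE'm (φ n)) hFm hFae
    have h0 : ∀ G : Set (Sp N), IE (fun _ => 0) G G = 0 := fun G => by simp [IE]
    simp only [h0, add_zero] at h1
    refine lt_of_le_of_lt (h1.trans ?_) (ENNReal.ofReal_lt_top (r := C))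
    refine (liminf_le_liminf (v := fun _ => ENNReal.ofReal C)
      (Eventually.of_forall fun n => hE'C (φ n))).trans ?_
    simp
  refine ⟨F, hFm, hFv, hFf, fun G h1 h2 h3 => le_trans ?_ (he G h1 h2 h3)⟩
  set M := (∫⁻ z, km N s t z).toReal
  have hM : 0 ≤ M := ENNReal.toReal_nonneg
  have hJ : ∀ n, JJ N s t (E' (φ n)) = ENNReal.ofReal (u (φ n) + M * m) := fun n => by
    obtain ⟨a1, a2⟩ := JJ_free hN hs hst ht hm.le (hE'm (φ n)) (hE'v _) (hE'f _)
    rw [← hE'F, a2, ENNReal.ofReal_toReal a1.ne]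
  have hJlim : Tendsto (fun n => JJ N s t (E' (φ n))) atTop (𝓝 (ENNReal.ofReal (sInf S + M * m))) := by
    simp only [hJ]
    exact ENNReal.tendsto_ofReal ((hu.comp hφ.tendsto_atTop).add_const _)
  have hl := lsc_lem (kp_meas (N := N) s t) (km_meas (N := N) s t) (fun n => hE'm (φ n)) hFm hFae
  have hl' : JJ N s t F ≤ ENNReal.ofReal (sInf S + M * m) := hl.trans hJlim.liminf_eq.le
  obtain ⟨a1, a2⟩ := JJ_free hN hs hst ht hm.le hFm hFv hFf
  have := ENNReal.toReal_mono ENNReal.ofReal_ne_top hl'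
  rw [← a2, ENNReal.toReal_ofReal (by positivity)] at this
  linarith

end final


end partP7

/-- Existence of minimizers for small volumes. -/
theorem stmt14 (N : ℕ) (hN : 2 ≤ N) (δ₀ : ℝ) (hδ : δ₀ ∈ Set.Ioo (0 : ℝ) 1) :
    ∃ m₀ : ℝ, 0 < m₀ ∧
      ∀ s t : ℝ, 0 < s → s < t → t < 1 → δ₀ ≤ t - s →
        ∀ m : ℝ, m ∈ Set.Ioo 0 m₀ →
          ∃ F : Set (EuclideanSpace ℝ (Fin N)), IsMinimizer N s t m F := by
  obtain ⟨m₀, hm₀, c, hc, h⟩ := key (N := N) (by omega) hδ.1 hδ.2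
  refine ⟨m₀, hm₀, fun s t hs hst ht hd m hm => ?_⟩
  refine main_exists (by omega) hs hst ht hm.1 hc fun E h1 h2 h3 => ?_
  obtain ⟨g1, g2⟩ := h s t hs hst ht hd E h1 (by rw [h2]; exact ENNReal.ofReal_le_ofReal hm.2.le) h3
  exact lower_bd (by omega) hs hst ht hm.1 h2 hc h3 g1 g2
end

section
/- Let N ≥ 2 and 0 < s < t < 1. There exists m̄₂ > 0 (depending on N, s, t) such that for every m > m̄₂ the ball B_m of volume m is not a local minimizer of F_{s,t} under the volume constraint: for every δ > 0 there exists a measurable set F ⊆ ℝ^N with |F| = m, P_t(F) < ∞, |F Δ B_m| < δ, and F_{s,t}(F) < F_{s,t}(B_m). -/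
open MeasureTheory ENNReal

/-- The radius of the ball in `ℝ^N` of volume `m`. -/
noncomputable def ballRad (N : ℕ) (m : ℝ) : ℝ :=
  (m / (volume (Metric.ball (0 : EuclideanSpace ℝ (Fin N)) 1)).toReal) ^ ((1 : ℝ) / N)


lemma phi_bound (p q b : ℝ) (hp : 1 < p) (hpq : p < q) (hb : 1 < b) :
    ∃ C : ℝ, 0 < C ∧ ∀ x : ℝ, 0 < x → x < b →
      x ^ q - 1 - q * (x - 1) ≤ C * (x ^ p - 1 - p * (x - 1)) := by
  set C : ℝ := q * (q - 1) * b ^ (q - p) / (p * (p - 1)) with hC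
  have hpp : 0 < p * (p - 1) := mul_pos (by linarith) (by linarith)
  have hqq : 0 < q * (q - 1) := mul_pos (by linarith) (by linarith)
  have hbpos : 0 < b ^ (q - p) := Real.rpow_pos_of_pos (by linarith) _
  have hCpos : 0 < C := by positivity
  refine ⟨C, hCpos, ?_⟩
  set f : ℝ → ℝ := fun x => C * (x ^ p - 1 - p * (x - 1)) - (x ^ q - 1 - q * (x - 1)) with hf
  set f' : ℝ → ℝ := fun x => C * (p * x ^ (p - 1) - p) - (q * x ^ (q - 1) - q) with hf'
  set f'' : ℝ → ℝ := fun x => C * (p * ((p - 1) * x ^ (p - 1 - 1))) -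
    (q * ((q - 1) * x ^ (q - 1 - 1))) with hf''
  have d1 : ∀ x, 0 < x → HasDerivAt f (f' x) x := by
    intro x hx
    have e1 := Real.hasDerivAt_rpow_const (x := x) (p := p) (Or.inl hx.ne')
    have e2 := Real.hasDerivAt_rpow_const (x := x) (p := q) (Or.inl hx.ne')
    have l1 : ∀ c : ℝ, HasDerivAt (fun x : ℝ => c * (x - 1)) c x := by
      intro c
      simpa using ((hasDerivAt_id x).sub_const 1).const_mul c
    exact (((e1.sub_const 1).sub (l1 p)).const_mul C).sub ((e2.sub_const 1).sub (l1 q))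
  have d2 : ∀ x, 0 < x → HasDerivAt f' (f'' x) x := by
    intro x hx
    have e1 := Real.hasDerivAt_rpow_const (x := x) (p := p - 1) (Or.inl hx.ne')
    have e2 := Real.hasDerivAt_rpow_const (x := x) (p := q - 1) (Or.inl hx.ne')
    exact (((e1.const_mul p).sub_const p).const_mul C).sub ((e2.const_mul q).sub_const q)
  have hconv : ConvexOn ℝ (Set.Ioo 0 b) f := by
    apply convexOn_of_hasDerivWithinAt2_nonneg (convex_Ioo 0 b) (f' := f') (f'' := f'')
    · intro x hx
      exact (d1 x hx.1).continuousAt.continuousWithinAt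
    · rw [interior_Ioo]; intro x hx; exact (d1 x hx.1).hasDerivWithinAt
    · rw [interior_Ioo]; intro x hx; exact (d2 x hx.1).hasDerivWithinAt
    · rw [interior_Ioo]; intro x hx
      have h1 : x ^ (q - 1 - 1) = x ^ (p - 1 - 1) * x ^ (q - p) := by
        rw [← Real.rpow_add hx.1]; congr 1; ring
      have h2 : x ^ (q - p) ≤ b ^ (q - p) :=
        Real.rpow_le_rpow hx.1.le hx.2.le (by linarith)
      have h3 : 0 < x ^ (p - 1 - 1) := Real.rpow_pos_of_pos hx.1 _
      have h4 : C * (p * (p - 1)) = q * (q - 1) * b ^ (q - p) := by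
        rw [hC]; exact div_mul_cancel₀ _ hpp.ne'
      have : f'' x = q * (q - 1) * x ^ (p - 1 - 1) * (b ^ (q - p) - x ^ (q - p)) := by
        simp only [hf'']; rw [h1]
        linear_combination (x ^ (p - 1 - 1)) * h4
      rw [this]
      exact mul_nonneg (mul_nonneg hqq.le h3.le) (by linarith)
  have hd0 : HasDerivAt f 0 1 := by
    have := d1 1 one_pos
    simpa [hf'] using this
  have hf1 : f 1 = 0 := by simp [hf]
  have h1m : (1:ℝ) ∈ Set.Ioo 0 b := ⟨one_pos, hb⟩
  have key : ∀ x, 0 < x → x < b → 0 ≤ f x := by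
    intro x hx hxb
    rcases lt_trichotomy x 1 with h | h | h
    · have := hconv.slope_le_of_hasDerivAt ⟨hx, hxb⟩ h1m h hd0
      rw [slope_def_field, hf1] at this
      rw [div_le_iff₀ (by linarith)] at this
      linarith
    · rw [h, hf1]
    · have := hconv.le_slope_of_hasDerivAt h1m ⟨hx, hxb⟩ h hd0
      rw [slope_def_field, hf1] at this
      rw [le_div_iff₀ (by linarith)] at this
      linarith
  intro x hx hxb
  have := key x hx hxb
  simp only [hf] at this
  linarith

lemma phi_pos (p x : ℝ) (hp : 1 < p) (hx : 0 < x) (hx1 : x ≠ 1) :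
    0 < x ^ p - 1 - p * (x - 1) := by
  have := one_add_mul_self_lt_rpow_one_add (s := x - 1) (by linarith) (sub_ne_zero.mpr hx1) hp
  rw [add_sub_cancel] at this
  linarith

/-- covariogram-type function of the unit ball -/
noncomputable def hfun (N : ℕ) (z : EuclideanSpace ℝ (Fin N)) : ℝ≥0∞ :=
  volume (Metric.ball (0 : EuclideanSpace ℝ (Fin N)) 1 ∩
    {x | x - z ∉ Metric.ball (0 : EuclideanSpace ℝ (Fin N)) 1})

lemma hset_meas (N : ℕ) : MeasurableSet {p : EuclideanSpace ℝ (Fin N) × EuclideanSpace ℝ (Fin N) |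
    p.2 ∈ Metric.ball (0 : EuclideanSpace ℝ (Fin N)) 1 ∧
    p.2 - p.1 ∉ Metric.ball (0 : EuclideanSpace ℝ (Fin N)) 1} := by
  apply MeasurableSet.inter
  · exact measurable_snd measurableSet_ball
  · exact (measurable_snd.sub measurable_fst) measurableSet_ball.compl

lemma hfun_meas (N : ℕ) : Measurable (hfun N) :=
  measurable_measure_prodMk_left (hset_meas N)

lemma fracPer_image (N : ℕ) (α : ℝ)
    (L : EuclideanSpace ℝ (Fin N) →L[ℝ] EuclideanSpace ℝ (Fin N)) (hL : Function.Bijective L) :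
    fracPer N α (L '' Metric.ball 0 1) = ENNReal.ofReal |L.det| * (ENNReal.ofReal |L.det| *
      ∫⁻ z, hfun N z * ENNReal.ofReal (‖L z‖ ^ (-((N : ℝ) + α)))) := by
  set B := Metric.ball (0 : EuclideanSpace ℝ (Fin N)) 1 with hB
  have hBm : MeasurableSet B := measurableSet_ball
  have cov : ∀ (S : Set (EuclideanSpace ℝ (Fin N))), MeasurableSet S →
      ∀ g : EuclideanSpace ℝ (Fin N) → ℝ≥0∞,
      ∫⁻ x in L '' S, g x = ENNReal.ofReal |L.det| * ∫⁻ x in S, g (L x) := by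
    intro S hS g
    rw [lintegral_image_eq_lintegral_abs_det_fderiv_mul volume hS (f' := fun _ => L)
      (fun x _ => L.hasFDerivAt.hasFDerivWithinAt) hL.1.injOn g]
    rw [lintegral_const_mul' _ _ ENNReal.ofReal_ne_top]
  have hK : Measurable (fun z : EuclideanSpace ℝ (Fin N) =>
      ENNReal.ofReal (‖L z‖ ^ (-((N : ℝ) + α)))) := by
    apply ENNReal.measurable_ofReal.comp
    exact (L.continuous.measurable.norm).pow_const _
  unfold fracPer interEnergy
  rw [← Set.image_compl_eq hL, cov B hBm]
  congr 1
  simp_rw [cov Bᶜ hBm.compl]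
  rw [lintegral_const_mul' _ _ ENNReal.ofReal_ne_top]
  congr 1
  simp_rw [← map_sub]
  have inner : ∀ x, ∫⁻ y in Bᶜ, ENNReal.ofReal (‖L (x - y)‖ ^ (-((N : ℝ) + α))) =
      ∫⁻ z, Bᶜ.indicator 1 (x - z) * ENNReal.ofReal (‖L z‖ ^ (-((N : ℝ) + α))) := by
    intro x
    rw [← lintegral_indicator hBm.compl, ← lintegral_sub_left_eq_self _ x]
    apply lintegral_congr
    intro z
    by_cases h : x - z ∈ Bᶜ
    · simp only [Set.indicator_of_mem h, Pi.one_apply, one_mul]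
      rw [show x - (x - z) = z by abel]
    · simp only [Set.indicator_of_notMem h, zero_mul]
  simp_rw [inner]
  rw [← lintegral_indicator hBm]
  have e2 : ∀ x, B.indicator (fun x => ∫⁻ z, Bᶜ.indicator 1 (x - z) *
      ENNReal.ofReal (‖L z‖ ^ (-((N : ℝ) + α)))) x =
      ∫⁻ z, ({p : EuclideanSpace ℝ (Fin N) × EuclideanSpace ℝ (Fin N) |
        p.2 ∈ B ∧ p.2 - p.1 ∉ B}).indicator 1 (z, x) *
        ENNReal.ofReal (‖L z‖ ^ (-((N : ℝ) + α))) := by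
    intro x
    by_cases hx : x ∈ B
    · rw [Set.indicator_of_mem hx]
      apply lintegral_congr
      intro z
      congr 1
      by_cases h : x - z ∈ B
      · rw [Set.indicator_of_notMem (by simpa using h), Set.indicator_of_notMem (by simp [h])]
      · rw [Set.indicator_of_mem (by simpa using h), Set.indicator_of_mem (by simp [h, hx])]
        rfl
    · rw [Set.indicator_of_notMem hx]
      simp [hx]
  simp_rw [e2]
  rw [lintegral_lintegral_swap]
  · apply lintegral_congr
    intro z
    rw [lintegral_mul_const' _ _ ENNReal.ofReal_ne_top]
    congr 1
    rw [hfun, ← lintegral_indicator_one]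
    · rfl
    · exact measurable_prodMk_left (hset_meas N)
  · apply Measurable.aemeasurable
    apply Measurable.mul
    · exact (measurable_one.indicator (hset_meas N)).comp measurable_swap
    · exact hK.comp measurable_snd

lemma hfun_radial (N : ℕ) (z w : EuclideanSpace ℝ (Fin N)) (h : ‖z‖ = ‖w‖) :
    hfun N z = hfun N w := by
  set ρ := (ℝ ∙ (w - z))ᗮ.reflection with hρ
  have hz : ρ w = z := Submodule.reflection_sub h.symm
  unfold hfun
  rw [← (LinearIsometryEquiv.measurePreserving ρ).measure_preimage]
  · congr 1
    ext x
    simp only [Set.mem_inter_iff, Set.mem_preimage, Metric.mem_ball, dist_zero_right,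
      Set.mem_ofPred_eq, LinearIsometryEquiv.norm_map]
    rw [← hz, ← map_sub, LinearIsometryEquiv.norm_map]
  · exact (measurable_prodMk_left (hset_meas N)).nullMeasurableSet

lemma polar (N : ℕ) (hN : 2 ≤ N) (G : EuclideanSpace ℝ (Fin N) → ℝ≥0∞) :
    ∫⁻ z, G z = ∫⁻ p : Metric.sphere (0 : EuclideanSpace ℝ (Fin N)) 1 × Set.Ioi (0:ℝ),
      G (p.2.1 • p.1.1)
      ∂((volume : Measure (EuclideanSpace ℝ (Fin N))).toSphere.prod
        (Measure.volumeIoiPow (N - 1))) := by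
  have : Nontrivial (EuclideanSpace ℝ (Fin N)) := by
    have : Nonempty (Fin N) := ⟨⟨0, by omega⟩⟩
    infer_instance
  have mp := (volume : Measure (EuclideanSpace ℝ (Fin N))).measurePreserving_homeomorphUnitSphereProd
  rw [finrank_euclideanSpace_fin] at mp
  rw [← mp.lintegral_comp_emb (Homeomorph.measurableEmbedding _)]
  rw [← restrict_compl_singleton (μ := (volume : Measure (EuclideanSpace ℝ (Fin N)))) 0,
    ← lintegral_subtype_comap (measurableSet_singleton _).compl]
  rw [restrict_compl_singleton]
  apply lintegral_congr
  intro z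
  congr 1
  have := congrArg Subtype.val ((homeomorphUnitSphereProd (EuclideanSpace ℝ (Fin N))).symm_apply_apply z)
  rw [homeomorphUnitSphereProd_symm_apply_coe] at this
  exact this.symm

/-- radial factor -/
noncomputable def Hrad (N : ℕ) (α : ℝ) (e : EuclideanSpace ℝ (Fin N)) : ℝ≥0∞ :=
  ∫⁻ r : Set.Ioi (0:ℝ), hfun N (r.1 • e) * ENNReal.ofReal (r.1 ^ (-((N : ℝ) + α)))
    ∂(Measure.volumeIoiPow (N - 1))

lemma fracPer_polar (N : ℕ) (hN : 2 ≤ N) (α : ℝ) (e : EuclideanSpace ℝ (Fin N)) (he : ‖e‖ = 1)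
    (A : EuclideanSpace ℝ (Fin N) →L[ℝ] EuclideanSpace ℝ (Fin N)) (hA : Function.Bijective A)
    (hdet : A.det = 1) (R : ℝ) (hR : 0 < R) :
    fracPer N α ((R • A) '' Metric.ball 0 1) = ENNReal.ofReal (R ^ ((N : ℝ) - α)) *
      ((∫⁻ θ : Metric.sphere (0 : EuclideanSpace ℝ (Fin N)) 1,
        ENNReal.ofReal (‖A θ.1‖ ^ (-((N : ℝ) + α)))
        ∂(volume : Measure (EuclideanSpace ℝ (Fin N))).toSphere) * Hrad N α e) := by
  have hbij : Function.Bijective (R • A : EuclideanSpace ℝ (Fin N) →L[ℝ] EuclideanSpace ℝ (Fin N)) := by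
    constructor
    · intro x y hxy
      simp only [smul_apply] at hxy
      exact hA.1 (smul_right_injective _ hR.ne' hxy)
    · intro y
      obtain ⟨x, hx⟩ := hA.2 (R⁻¹ • y)
      exact ⟨x, by simp [hx, smul_smul, hR.ne']⟩
  have hd : (R • A : EuclideanSpace ℝ (Fin N) →L[ℝ] EuclideanSpace ℝ (Fin N)).det = R ^ N := by
    have : A.det = LinearMap.det (A : EuclideanSpace ℝ (Fin N) →ₗ[ℝ] EuclideanSpace ℝ (Fin N)) := rfl
    rw [this] at hdet
    change LinearMap.det (R • (A : EuclideanSpace ℝ (Fin N) →ₗ[ℝ] EuclideanSpace ℝ (Fin N))) = _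
    rw [LinearMap.det_smul, hdet, finrank_euclideanSpace_fin, mul_one]
  rw [fracPer_image N α _ hbij, hd, abs_of_pos (pow_pos hR N), polar N hN]
  have key : ∀ p : Metric.sphere (0 : EuclideanSpace ℝ (Fin N)) 1 × Set.Ioi (0:ℝ),
      hfun N (p.2.1 • p.1.1) * ENNReal.ofReal (‖(R • A) (p.2.1 • p.1.1)‖ ^ (-((N : ℝ) + α))) =
      ENNReal.ofReal (R ^ (-((N : ℝ) + α))) *
      (ENNReal.ofReal (‖A p.1.1‖ ^ (-((N : ℝ) + α))) *
      (hfun N (p.2.1 • e) * ENNReal.ofReal (p.2.1 ^ (-((N : ℝ) + α))))) := by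
    rintro ⟨θ, r, hr⟩
    have hr' : 0 < r := hr
    have h1 : hfun N (r • θ.1) = hfun N (r • e) := by
      apply hfun_radial
      rw [norm_smul, norm_smul, he, norm_eq_of_mem_sphere]
    simp only [h1]
    have h2 : ‖(R • A) (r • θ.1)‖ = R * (‖A θ.1‖ * r) := by
      rw [smul_apply, map_smul, norm_smul, norm_smul, Real.norm_of_nonneg hR.le,
        Real.norm_of_nonneg hr'.le]
      ring
    rw [h2, Real.mul_rpow hR.le (by positivity), Real.mul_rpow (by positivity) hr'.le,
      ENNReal.ofReal_mul (by positivity), ENNReal.ofReal_mul (by positivity)]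
    ring
  simp_rw [key]
  rw [lintegral_const_mul' _ _ ENNReal.ofReal_ne_top,
    lintegral_prod_mul (f := fun θ : Metric.sphere (0 : EuclideanSpace ℝ (Fin N)) 1 =>
        ENNReal.ofReal (‖A θ.1‖ ^ (-((N : ℝ) + α))))
      (g := fun r : Set.Ioi (0:ℝ) =>
        hfun N (r.1 • e) * ENNReal.ofReal (r.1 ^ (-((N : ℝ) + α))))]
  · rw [← Hrad, ← mul_assoc, ← mul_assoc, ← ENNReal.ofReal_mul (by positivity),
      ← ENNReal.ofReal_mul (by positivity)]
    congr 2
    rw [← Real.rpow_natCast, ← Real.rpow_add hR, ← Real.rpow_add hR]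
    congr 1
    ring
  · apply Measurable.aemeasurable
    apply ENNReal.measurable_ofReal.comp
    exact ((A.continuous.measurable.comp measurable_subtype_coe).norm).pow_const _
  · apply Measurable.aemeasurable
    apply Measurable.mul
    · exact (hfun_meas N).comp (measurable_subtype_coe.smul_const e)
    · exact ENNReal.measurable_ofReal.comp (measurable_subtype_coe.pow_const _)

lemma sphere_int (N : ℕ) (hN : 2 ≤ N)
    (A : EuclideanSpace ℝ (Fin N) →L[ℝ] EuclideanSpace ℝ (Fin N)) (hA : Function.Bijective A)
    (hdet : A.det = 1) :
    ∫⁻ θ : Metric.sphere (0 : EuclideanSpace ℝ (Fin N)) 1,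
        ENNReal.ofReal ((‖A θ.1‖⁻¹) ^ N)
        ∂(volume : Measure (EuclideanSpace ℝ (Fin N))).toSphere =
      (volume : Measure (EuclideanSpace ℝ (Fin N))).toSphere Set.univ := by
  have hm : MeasurableSet (A ⁻¹' Metric.ball 0 1) := A.continuous.measurable measurableSet_ball
  have h1 : volume (A ⁻¹' Metric.ball 0 1) =
      volume (Metric.ball (0 : EuclideanSpace ℝ (Fin N)) 1) := by
    have hdet' : LinearMap.det (A : EuclideanSpace ℝ (Fin N) →ₗ[ℝ] EuclideanSpace ℝ (Fin N)) = 1 :=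
      hdet
    have := Measure.addHaar_preimage_linearMap (volume : Measure (EuclideanSpace ℝ (Fin N)))
      (f := (A : EuclideanSpace ℝ (Fin N) →ₗ[ℝ] EuclideanSpace ℝ (Fin N)))
      (by rw [hdet']; exact one_ne_zero) (Metric.ball 0 1)
    rw [hdet'] at this
    simpa using this
  rw [← lintegral_indicator_one hm, polar N hN, lintegral_prod] at h1
  · have hNpos : (0:ℝ) < N := by positivity
    have h2 : ∀ θ : Metric.sphere (0 : EuclideanSpace ℝ (Fin N)) 1,
        ENNReal.ofReal ((‖A θ.1‖⁻¹) ^ N) = (N : ℝ≥0∞) *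
        ∫⁻ r : Set.Ioi (0:ℝ), (A ⁻¹' Metric.ball 0 1).indicator 1 (r.1 • θ.1)
          ∂(Measure.volumeIoiPow (N - 1)) := by
      intro θ
      have hθ : A θ.1 ≠ 0 := by
        intro h
        have : θ.1 = 0 := hA.1 (by rw [h, map_zero])
        have h' := norm_eq_of_mem_sphere θ
        rw [this] at h'
        simp at h'
      have hpos : ‖A θ.1‖⁻¹ ∈ Set.Ioi (0:ℝ) := inv_pos.mpr (norm_pos_iff.mpr hθ)
      have h3 : ∀ r : Set.Ioi (0:ℝ), (A ⁻¹' Metric.ball 0 1).indicator (1 : EuclideanSpace ℝ (Fin N) → ℝ≥0∞) (r.1 • θ.1) =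
          (Set.Iio (⟨‖A θ.1‖⁻¹, hpos⟩ : Set.Ioi (0:ℝ))).indicator 1 r := by
        rintro ⟨r, hr⟩
        have hr' : 0 < r := hr
        have : r • θ.1 ∈ A ⁻¹' Metric.ball 0 1 ↔
            (⟨r, hr⟩ : Set.Ioi (0:ℝ)) ∈ Set.Iio (⟨‖A θ.1‖⁻¹, hpos⟩ : Set.Ioi (0:ℝ)) := by
          rw [Set.mem_preimage, mem_ball_zero_iff, map_smul, norm_smul, Real.norm_of_nonneg hr'.le,
            Set.mem_Iio, Subtype.mk_lt_mk, lt_inv_comm₀ hr' (norm_pos_iff.mpr hθ),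
            ← one_div, lt_div_iff₀ hr', mul_comm]
        by_cases h : r • θ.1 ∈ A ⁻¹' Metric.ball 0 1
        · rw [Set.indicator_of_mem h, Set.indicator_of_mem (this.mp h)]; rfl
        · rw [Set.indicator_of_notMem h, Set.indicator_of_notMem (fun h' => h (this.mpr h'))]
      simp_rw [h3]
      rw [lintegral_indicator_one measurableSet_Iio, Measure.volumeIoiPow_apply_Iio]
      rw [show N - 1 + 1 = N by omega]
      have : (((N - 1 : ℕ) : ℝ) + 1) = N := by
        rw [Nat.cast_pred (by omega)]; ring
      rw [this, ← ENNReal.ofReal_natCast, ← ENNReal.ofReal_mul hNpos.le]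
      congr 1
      field_simp
    simp_rw [h2]
    rw [lintegral_const_mul' _ _ (ENNReal.natCast_ne_top N), h1, Measure.toSphere_apply_univ,
      finrank_euclideanSpace_fin]
  · apply Measurable.aemeasurable
    apply (measurable_one.indicator hm).comp
    fun_prop

lemma hfun_le (N : ℕ) (z : EuclideanSpace ℝ (Fin N)) :
    hfun N z ≤ volume (Metric.ball (0 : EuclideanSpace ℝ (Fin N)) 1) :=
  measure_mono Set.inter_subset_left

lemma hfun_le' (N : ℕ) (hN : 2 ≤ N) (z : EuclideanSpace ℝ (Fin N)) (hz : ‖z‖ ≤ 1) :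
    hfun N z ≤ ENNReal.ofReal (N * ‖z‖) *
      volume (Metric.ball (0 : EuclideanSpace ℝ (Fin N)) 1) := by
  have : Nontrivial (EuclideanSpace ℝ (Fin N)) := by
    have : Nonempty (Fin N) := ⟨⟨0, by omega⟩⟩
    infer_instance
  have hsub : Metric.ball (0 : EuclideanSpace ℝ (Fin N)) 1 ∩
    {x | x - z ∉ Metric.ball (0 : EuclideanSpace ℝ (Fin N)) 1} ⊆
      Metric.ball 0 1 \ Metric.ball 0 (1 - ‖z‖) := by
    rintro x ⟨hx1, hx2⟩
    refine ⟨hx1, fun h => hx2 ?_⟩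
    rw [mem_ball_zero_iff] at *
    have := norm_sub_le x z
    linarith
  refine (measure_mono hsub).trans ?_
  rw [measure_sdiff (Metric.ball_subset_ball (by linarith [norm_nonneg z]))
    measurableSet_ball.nullMeasurableSet measure_ball_lt_top.ne]
  rw [Measure.addHaar_ball volume _ (by linarith : 0 ≤ 1 - ‖z‖), finrank_euclideanSpace_fin]
  rw [tsub_le_iff_right, ← add_mul, ← ENNReal.ofReal_add (by positivity)
    (pow_nonneg (by linarith) _)]
  have hb := one_add_mul_le_pow (a := -‖z‖) (by linarith) N
  have h1 : (1:ℝ) ≤ N * ‖z‖ + (1 - ‖z‖) ^ N := by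
    rw [← sub_eq_add_neg] at hb
    linarith
  calc volume (Metric.ball (0 : EuclideanSpace ℝ (Fin N)) 1)
      = 1 * volume (Metric.ball (0 : EuclideanSpace ℝ (Fin N)) 1) := (one_mul _).symm
    _ ≤ _ := by
      gcongr
      rw [← ENNReal.ofReal_one]
      exact ENNReal.ofReal_le_ofReal h1

lemma hfun_pos (N : ℕ) (z : EuclideanSpace ℝ (Fin N)) (hz : z ≠ 0) : 0 < hfun N z := by
  have hz' : 0 < ‖z‖ := norm_pos_iff.mpr hz
  have ho : IsOpen (Metric.ball (0 : EuclideanSpace ℝ (Fin N)) 1 ∩ {x | 1 < ‖x - z‖}) :=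
    Metric.isOpen_ball.inter (isOpen_lt continuous_const (by fun_prop))
  have hne : (Metric.ball (0 : EuclideanSpace ℝ (Fin N)) 1 ∩ {x | 1 < ‖x - z‖}).Nonempty := by
    set c : ℝ := max 0 (1 - ‖z‖ / 2) with hc
    have hc0 : 0 ≤ c := le_max_left _ _
    have hc1 : c < 1 := max_lt one_pos (by linarith)
    have hc2 : 1 - ‖z‖ / 2 ≤ c := le_max_right _ _
    refine ⟨(-(c / ‖z‖)) • z, ?_, ?_⟩
    · rw [mem_ball_zero_iff, norm_smul, norm_neg, Real.norm_of_nonneg (by positivity),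
        div_mul_cancel₀ _ hz'.ne']
      exact hc1
    · change 1 < ‖(-(c / ‖z‖)) • z - z‖
      have : (-(c / ‖z‖)) • z - z = -((c / ‖z‖ + 1) • z) := by module
      rw [this, norm_neg, norm_smul, Real.norm_of_nonneg (by positivity), add_mul,
        div_mul_cancel₀ _ hz'.ne']
      linarith
  refine (ho.measure_pos volume hne).trans_le (measure_mono ?_)
  rintro x ⟨h1, h2⟩
  refine ⟨h1, ?_⟩
  change ¬ _
  rw [mem_ball_zero_iff, not_lt]
  exact le_of_lt h2

lemma Hrad_pos (N : ℕ) (α : ℝ) (e : EuclideanSpace ℝ (Fin N)) (he : ‖e‖ = 1) :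
    0 < Hrad N α e := by
  unfold Hrad
  rw [lintegral_pos_iff_support]
  · have : (Function.support fun r : Set.Ioi (0:ℝ) =>
        hfun N (r.1 • e) * ENNReal.ofReal (r.1 ^ (-((N : ℝ) + α)))) = Set.univ := by
      ext r
      simp only [Function.mem_support, Set.mem_univ, iff_true]
      apply mul_ne_zero
      · apply (hfun_pos N _ _).ne'
        apply smul_ne_zero r.2.ne'
        intro h; simp [h] at he
      · rw [ne_eq, ENNReal.ofReal_eq_zero, not_le]
        exact Real.rpow_pos_of_pos r.2 _
    rw [this]
    refine lt_of_lt_of_le ?_ (measure_mono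
      (Set.subset_univ (Set.Iio (⟨1, Set.mem_Ioi.mpr one_pos⟩ : Set.Ioi (0:ℝ)))))
    rw [Measure.volumeIoiPow_apply_Iio, ENNReal.ofReal_pos]
    positivity
  · apply Measurable.mul
    · exact (hfun_meas N).comp (measurable_subtype_coe.smul_const e)
    · exact ENNReal.measurable_ofReal.comp (measurable_subtype_coe.pow_const _)

lemma Hrad_lt_top (N : ℕ) (hN : 2 ≤ N) (α : ℝ) (h0 : 0 < α) (h1 : α < 1)
    (e : EuclideanSpace ℝ (Fin N)) (he : ‖e‖ = 1) :
    Hrad N α e < ⊤ := by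
  unfold Hrad Measure.volumeIoiPow
  rw [lintegral_withDensity_eq_lintegral_mul]
  rotate_left
  · exact ENNReal.measurable_ofReal.comp (measurable_subtype_coe.pow_const _)
  · apply Measurable.mul
    · exact (hfun_meas N).comp (measurable_subtype_coe.smul_const e)
    · exact ENNReal.measurable_ofReal.comp (measurable_subtype_coe.pow_const _)
  simp only [Pi.mul_apply]
  rw [lintegral_subtype_comap measurableSet_Ioi (fun r : ℝ => ENNReal.ofReal (r ^ (N - 1)) *
    (hfun N (r • e) * ENNReal.ofReal (r ^ (-((N : ℝ) + α)))))]
  set c := volume (Metric.ball (0 : EuclideanSpace ℝ (Fin N)) 1) with hc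
  have hct : c ≠ ⊤ := measure_ball_lt_top.ne
  have hpow : ∀ r : ℝ, 0 < r → ENNReal.ofReal (r ^ (N - 1)) *
      ENNReal.ofReal (r ^ (-((N : ℝ) + α))) = ENNReal.ofReal (r ^ (-1 - α)) := by
    intro r hr
    rw [← ENNReal.ofReal_mul (by positivity), ← Real.rpow_natCast, ← Real.rpow_add hr,
      Nat.cast_pred (by omega)]
    congr 2
    ring
  rw [← Set.Ioc_union_Ioi_eq_Ioi (zero_le_one' ℝ)]
  refine (lintegral_union_le _ _ _).trans_lt (ENNReal.add_lt_top.mpr ⟨?_, ?_⟩)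
  · calc _ ≤ ∫⁻ r in Set.Ioc (0:ℝ) 1, (ENNReal.ofReal N * c) * ENNReal.ofReal (r ^ (-α)) := by
          apply setLIntegral_mono' measurableSet_Ioc
          intro r hr
          have hr0 : 0 < r := hr.1
          have hn : ‖r • e‖ = r := by rw [norm_smul, he, mul_one, Real.norm_of_nonneg hr0.le]
          have := hfun_le' N hN (r • e) (by rw [hn]; exact hr.2)
          rw [hn] at this
          calc _ ≤ ENNReal.ofReal (r ^ (N - 1)) *
                ((ENNReal.ofReal (N * r) * c) * ENNReal.ofReal (r ^ (-((N : ℝ) + α)))) := by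
                gcongr
            _ = ENNReal.ofReal (N * r) * c * (ENNReal.ofReal (r ^ (N - 1)) *
                ENNReal.ofReal (r ^ (-((N : ℝ) + α)))) := by ring
            _ = (ENNReal.ofReal N * c) * (ENNReal.ofReal r * ENNReal.ofReal (r ^ (-1 - α))) := by
                rw [hpow r hr0, ENNReal.ofReal_mul (by positivity)]; ring
            _ = _ := by
                rw [← ENNReal.ofReal_mul hr0.le]
                congr 2
                nth_rewrite 1 [← Real.rpow_one r]
                rw [← Real.rpow_add hr0]
                congr 1
                ring
      _ < ⊤ := by
          rw [lintegral_const_mul' _ _ (ENNReal.mul_ne_top ENNReal.ofReal_ne_top hct)]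
          apply ENNReal.mul_lt_top (ENNReal.mul_lt_top ENNReal.ofReal_lt_top hct.lt_top)
          have hi : IntegrableOn (fun r : ℝ => r ^ (-α)) (Set.Ioc 0 1) :=
            (intervalIntegral.intervalIntegrable_rpow' (by linarith)).1
          exact hi.lintegral_lt_top
  · calc _ ≤ ∫⁻ r in Set.Ioi (1:ℝ), c * ENNReal.ofReal (r ^ (-1 - α)) := by
          apply setLIntegral_mono' measurableSet_Ioi
          intro r hr
          have hr0 : 0 < r := one_pos.trans hr
          calc _ ≤ ENNReal.ofReal (r ^ (N - 1)) *
                (c * ENNReal.ofReal (r ^ (-((N : ℝ) + α)))) := by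
                gcongr
                exact hfun_le N _
            _ = c * (ENNReal.ofReal (r ^ (N - 1)) *
                ENNReal.ofReal (r ^ (-((N : ℝ) + α)))) := by ring
            _ = _ := by rw [hpow r hr0]
      _ < ⊤ := by
          rw [lintegral_const_mul' _ _ hct]
          apply ENNReal.mul_lt_top hct.lt_top
          exact (integrableOn_Ioi_rpow_of_lt (by linarith) one_pos).lintegral_lt_top

/-- diagonal weights -/
noncomputable def dw (N : ℕ) (l : ℝ) (i : Fin N) : ℝ :=
  if i.1 = 0 then l else if i.1 = 1 then l⁻¹ else 1

/-- diagonal stretching -/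
noncomputable def diagA (N : ℕ) (l : ℝ) :
    EuclideanSpace ℝ (Fin N) →L[ℝ] EuclideanSpace ℝ (Fin N) :=
  LinearMap.toContinuousLinearMap (Matrix.toLpLin 2 2 (Matrix.diagonal (dw N l)))

lemma diagA_apply (N : ℕ) (l : ℝ) (x : EuclideanSpace ℝ (Fin N)) (i : Fin N) :
    diagA N l x i = dw N l i * x i := by
  simp [diagA, Matrix.toLpLin_apply, Matrix.mulVec_diagonal]

lemma diagA_det (N : ℕ) (hN : 2 ≤ N) (l : ℝ) (hl : 0 < l) : (diagA N l).det = 1 := by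
  obtain ⟨n, rfl⟩ : ∃ n, N = n + 2 := ⟨N - 2, by omega⟩
  change LinearMap.det (Matrix.toLpLin 2 2 (Matrix.diagonal (dw (n + 2) l))) = 1
  rw [LinearMap.det_toLpLin, Matrix.det_diagonal, Fin.prod_univ_succ, Fin.prod_univ_succ]
  simp [dw, hl.ne']

lemma diagA_bij (N : ℕ) (hN : 2 ≤ N) (l : ℝ) (hl : 0 < l) : Function.Bijective (diagA N l) := by
  have hinj : Function.Injective (diagA N l) := by
    intro x y hxy
    ext i
    have := congrArg (fun v => v i) hxy
    simp only [diagA_apply] at this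
    have hd : dw N l i ≠ 0 := by
      unfold dw; split_ifs <;> positivity
    exact mul_left_cancel₀ hd this
  exact ⟨hinj, (LinearMap.injective_iff_surjective
    (f := (diagA N l : EuclideanSpace ℝ (Fin N) →ₗ[ℝ] EuclideanSpace ℝ (Fin N)))).mp hinj⟩

lemma dw_bounds (N : ℕ) (l : ℝ) (hl : 1 ≤ l) (i : Fin N) : l⁻¹ ≤ dw N l i ∧ dw N l i ≤ l := by
  have : l⁻¹ ≤ 1 := inv_le_one_of_one_le₀ hl
  unfold dw
  split_ifs <;> constructor <;> linarith

lemma diagA_norm_le (N : ℕ) (l : ℝ) (hl : 1 ≤ l) (x : EuclideanSpace ℝ (Fin N)) :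
    ‖diagA N l x‖ ≤ l * ‖x‖ := by
  have hl0 : 0 < l := by linarith
  apply le_of_sq_le_sq _ (by positivity)
  rw [mul_pow, EuclideanSpace.real_norm_sq_eq, EuclideanSpace.real_norm_sq_eq, Finset.mul_sum]
  apply Finset.sum_le_sum
  intro i _
  rw [diagA_apply, mul_pow]
  have := dw_bounds N l hl i
  have h0 : 0 < l⁻¹ := by positivity
  have h1 : 0 ≤ dw N l i := by linarith
  gcongr
  exact this.2

lemma diagA_le_norm (N : ℕ) (l : ℝ) (hl : 1 ≤ l) (x : EuclideanSpace ℝ (Fin N)) :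
    l⁻¹ * ‖x‖ ≤ ‖diagA N l x‖ := by
  have hl0 : 0 < l := by linarith
  apply le_of_sq_le_sq _ (by positivity)
  rw [mul_pow, EuclideanSpace.real_norm_sq_eq, EuclideanSpace.real_norm_sq_eq, Finset.mul_sum]
  apply Finset.sum_le_sum
  intro i _
  rw [diagA_apply, mul_pow]
  have := dw_bounds N l hl i
  gcongr
  exact this.1

lemma diagA_e (N : ℕ) (hN : 2 ≤ N) (l : ℝ) :
    diagA N l (EuclideanSpace.single ⟨0, by omega⟩ 1) = l • EuclideanSpace.single ⟨0, by omega⟩ 1 := by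
  ext i
  rw [diagA_apply]
  by_cases h : i = ⟨0, by omega⟩
  · subst h; simp [dw]
  · simp [h]

/-- spherical factor -/
noncomputable def Ssph (N : ℕ) (α l : ℝ) : ℝ :=
  ∫ θ : Metric.sphere (0 : EuclideanSpace ℝ (Fin N)) 1, ‖diagA N l θ.1‖ ^ (-((N : ℝ) + α))
    ∂(volume : Measure (EuclideanSpace ℝ (Fin N))).toSphere

lemma diagA_sphere_pos (N : ℕ) (l : ℝ) (hl : 1 ≤ l)
    (θ : Metric.sphere (0 : EuclideanSpace ℝ (Fin N)) 1) : 0 < ‖diagA N l θ.1‖ := by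
  have := diagA_le_norm N l hl θ.1
  rw [norm_eq_of_mem_sphere, mul_one] at this
  have h0 : 0 < l⁻¹ := by positivity
  linarith

lemma Ssph_cont (N : ℕ) (α l : ℝ) (hl : 1 ≤ l) :
    Continuous (fun θ : Metric.sphere (0 : EuclideanSpace ℝ (Fin N)) 1 =>
      ‖diagA N l θ.1‖ ^ (-((N : ℝ) + α))) := by
  apply Continuous.rpow_const (by fun_prop)
  intro θ
  exact Or.inl (diagA_sphere_pos N l hl θ).ne'

lemma cont_int (N : ℕ) (f : Metric.sphere (0 : EuclideanSpace ℝ (Fin N)) 1 → ℝ)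
    (hf : Continuous f) :
    Integrable f (volume : Measure (EuclideanSpace ℝ (Fin N))).toSphere :=
  hf.integrable_of_hasCompactSupport (HasCompactSupport.of_compactSpace f)

lemma Ssph_one (N : ℕ) (α : ℝ) :
    Ssph N α 1 = (volume : Measure (EuclideanSpace ℝ (Fin N))).toSphere.real Set.univ := by
  unfold Ssph
  have : ∀ θ : Metric.sphere (0 : EuclideanSpace ℝ (Fin N)) 1,
      ‖diagA N 1 θ.1‖ ^ (-((N : ℝ) + α)) = 1 := by
    intro θ
    have h1 := diagA_le_norm N 1 le_rfl θ.1
    have h2 := diagA_norm_le N 1 le_rfl θ.1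
    rw [norm_eq_of_mem_sphere] at h1 h2
    have : ‖diagA N 1 θ.1‖ = 1 := by
      apply le_antisymm <;> linarith
    rw [this, Real.one_rpow]
  simp_rw [this]
  simp

lemma sphere_gap (N : ℕ) (hN : 2 ≤ N) (s t : ℝ) (hs : 0 < s) (hst : s < t) :
    ∃ C : ℝ, 0 < C ∧ ∀ l : ℝ, 1 < l → l ≤ 2 →
      0 < Ssph N s l - Ssph N s 1 ∧
      Ssph N t l - Ssph N t 1 ≤ C * (Ssph N s l - Ssph N s 1) := by
  have hN0 : (0:ℝ) < N := by positivity
  have hps : 1 < 1 + s / N := by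
    have : 0 < s / N := by positivity
    linarith
  have hpst : 1 + s / N < 1 + t / N := by gcongr
  obtain ⟨C, hC, hCb⟩ := phi_bound (1 + s / N) (1 + t / N) (2 ^ N + 1) hps hpst
    (by have : (0:ℝ) < 2 ^ N := by positivity
        linarith)
  refine ⟨C, hC, ?_⟩
  intro l hl hl2
  set f : Metric.sphere (0 : EuclideanSpace ℝ (Fin N)) 1 → ℝ :=
    fun θ => (‖diagA N l θ.1‖⁻¹) ^ N with hf
  have hpos : ∀ θ : Metric.sphere (0 : EuclideanSpace ℝ (Fin N)) 1, 0 < ‖diagA N l θ.1‖ :=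
    diagA_sphere_pos N l hl.le
  have hfpos : ∀ θ, 0 < f θ := fun θ => pow_pos (inv_pos.mpr (hpos θ)) N
  have hfb : ∀ θ, f θ < 2 ^ N + 1 := by
    intro θ
    have h1 := diagA_le_norm N l hl.le θ.1
    rw [norm_eq_of_mem_sphere, mul_one] at h1
    have h2 : ‖diagA N l θ.1‖⁻¹ ≤ 2 := by
      rw [inv_le_comm₀ (hpos θ) two_pos]
      refine le_trans ?_ h1
      gcongr
    have : f θ ≤ 2 ^ N := pow_le_pow_left₀ (inv_pos.mpr (hpos θ)).le h2 N
    linarith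
  have hfc : Continuous f := by
    apply Continuous.pow
    exact Continuous.inv₀ (by fun_prop) (fun θ => (hpos θ).ne')
  have hfi := cont_int N f hfc
  have hfp : ∀ α : ℝ, ∀ θ, ‖diagA N l θ.1‖ ^ (-((N : ℝ) + α)) = f θ ^ (1 + α / N) := by
    intro α θ
    simp only [hf]
    rw [← Real.rpow_natCast, ← Real.rpow_mul (inv_pos.mpr (hpos θ)).le, Real.inv_rpow (hpos θ).le,
      Real.rpow_neg (hpos θ).le]
    congr 2
    field_simp
  have hfint : ∫ θ, f θ ∂(volume : Measure (EuclideanSpace ℝ (Fin N))).toSphere =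
      (volume : Measure (EuclideanSpace ℝ (Fin N))).toSphere.real Set.univ := by
    rw [integral_eq_lintegral_of_nonneg_ae (Filter.Eventually.of_forall fun θ => (hfpos θ).le)
      hfi.aestronglyMeasurable]
    simp only [hf]
    rw [sphere_int N hN _ (diagA_bij N hN l (by linarith)) (diagA_det N hN l (by linarith))]
    rfl
  have hrepc : ∀ α : ℝ, Continuous (fun θ => f θ ^ (1 + α / N)) := by
    intro α
    apply hfc.rpow_const
    intro θ
    exact Or.inl (hfpos θ).ne'
  have hrep : ∀ α : ℝ, Ssph N α l - Ssph N α 1 =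
      ∫ θ, (f θ ^ (1 + α / N) - 1 - (1 + α / N) * (f θ - 1))
        ∂(volume : Measure (EuclideanSpace ℝ (Fin N))).toSphere := by
    intro α
    have hi := cont_int N _ (hrepc α)
    have i1 : Integrable (fun θ => f θ ^ (1 + α / N) - 1)
        (volume : Measure (EuclideanSpace ℝ (Fin N))).toSphere := hi.sub (integrable_const _)
    have i2 : Integrable (fun θ => f θ - 1)
        (volume : Measure (EuclideanSpace ℝ (Fin N))).toSphere := hfi.sub (integrable_const _)
    rw [Ssph_one, integral_sub i1 (i2.const_mul _),
      integral_sub hi (integrable_const _), integral_const_mul, integral_sub hfi (integrable_const _),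
      hfint]
    simp only [Ssph, hfp]
    simp
  have hgc : ∀ α : ℝ, Continuous (fun θ => f θ ^ (1 + α / N) - 1 - (1 + α / N) * (f θ - 1)) := by
    intro α
    exact ((hrepc α).sub continuous_const).sub (continuous_const.mul (hfc.sub continuous_const))
  constructor
  · rw [hrep]
    set e : Metric.sphere (0 : EuclideanSpace ℝ (Fin N)) 1 :=
      ⟨EuclideanSpace.single ⟨0, by omega⟩ 1, by simp⟩ with he
    apply (hgc s).integral_pos_of_hasCompactSupport_nonneg_nonzero
      (HasCompactSupport.of_compactSpace _) (x := e)
    · intro θ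
      by_cases h : f θ = 1
      · simp [h]
      · exact (phi_pos _ _ hps (hfpos θ) h).le
    · apply (phi_pos _ _ hps (hfpos e) _).ne'
      have : ‖diagA N l e.1‖ = l := by
        simp only [he]
        rw [diagA_e N hN, norm_smul, PiLp.norm_single, Real.norm_of_nonneg (by linarith)]
        simp
      simp only [hf, this]
      have : l⁻¹ ^ N < 1 := pow_lt_one₀ (by positivity) (inv_lt_one_of_one_lt₀ hl) (by omega)
      exact this.ne
  · rw [hrep, hrep, ← integral_const_mul]
    apply integral_mono (cont_int N _ (hgc t)) ((cont_int N _ (hgc s)).const_mul C)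
    intro θ
    exact hCb (f θ) (hfpos θ) (hfb θ)

lemma fracPer_eval (N : ℕ) (hN : 2 ≤ N) (α : ℝ) (h0 : 0 < α) (h1 : α < 1)
    (e : EuclideanSpace ℝ (Fin N)) (he : ‖e‖ = 1) (l : ℝ) (hl : 1 ≤ l) (R : ℝ) (hR : 0 < R) :
    fracPer N α ((R • diagA N l) '' Metric.ball 0 1) < ⊤ ∧
    (fracPer N α ((R • diagA N l) '' Metric.ball 0 1)).toReal =
      R ^ ((N : ℝ) - α) * (Ssph N α l * (Hrad N α e).toReal) := by
  have hi := cont_int N _ (Ssph_cont N α l hl)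
  rw [fracPer_polar N hN α e he _ (diagA_bij N hN l (by linarith)) (diagA_det N hN l (by linarith))
    R hR]
  constructor
  · exact ENNReal.mul_lt_top ENNReal.ofReal_lt_top
      (ENNReal.mul_lt_top hi.lintegral_lt_top (Hrad_lt_top N hN α h0 h1 e he))
  · rw [ENNReal.toReal_mul, ENNReal.toReal_mul, ENNReal.toReal_ofReal (by positivity), Ssph,
      integral_eq_lintegral_of_nonneg_ae (Filter.Eventually.of_forall fun θ => by positivity)
      hi.aestronglyMeasurable]

lemma image_sub (N : ℕ) (l : ℝ) (hl : 1 ≤ l) (R : ℝ) (hR : 0 < R) :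
    (R • diagA N l) '' Metric.ball 0 1 ⊆ Metric.ball 0 (l * R) := by
  rintro _ ⟨x, hx, rfl⟩
  rw [mem_ball_zero_iff] at *
  rw [smul_apply, norm_smul, Real.norm_of_nonneg hR.le, mul_comm l R]
  have := diagA_norm_le N l hl x
  have h2 : l * ‖x‖ < l := by nlinarith
  gcongr
  linarith

lemma sub_image (N : ℕ) (hN : 2 ≤ N) (l : ℝ) (hl : 1 ≤ l) (R : ℝ) (hR : 0 < R) :
    Metric.ball 0 (l⁻¹ * R) ⊆ (R • diagA N l) '' Metric.ball 0 1 := by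
  intro y hy
  obtain ⟨x, hx⟩ := (diagA_bij N hN l (by linarith)).2 (R⁻¹ • y)
  refine ⟨x, ?_, ?_⟩
  · rw [mem_ball_zero_iff] at *
    have h1 := diagA_le_norm N l hl x
    have hl0 : 0 < l⁻¹ := by positivity
    rw [hx, norm_smul, norm_inv, Real.norm_of_nonneg hR.le, inv_mul_eq_div R,
      le_div_iff₀ hR] at h1
    have : l⁻¹ * R * ‖x‖ < l⁻¹ * R * 1 := by linarith [mul_right_comm l⁻¹ R ‖x‖]
    exact lt_of_mul_lt_mul_left this (by positivity)
  · rw [smul_apply, hx, smul_smul, mul_inv_cancel₀ hR.ne', one_smul]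

lemma image_one (N : ℕ) (hN : 2 ≤ N) (R : ℝ) (hR : 0 < R) :
    (R • diagA N 1) '' Metric.ball 0 1 = Metric.ball 0 R := by
  apply Set.Subset.antisymm
  · simpa using image_sub N 1 le_rfl R hR
  · simpa using sub_image N hN 1 le_rfl R hR

lemma smul_diagA_det (N : ℕ) (hN : 2 ≤ N) (l : ℝ) (hl : 0 < l) (R : ℝ) :
    (R • diagA N l : EuclideanSpace ℝ (Fin N) →L[ℝ] EuclideanSpace ℝ (Fin N)).det = R ^ N := by
  have hdet : LinearMap.det (diagA N l : EuclideanSpace ℝ (Fin N) →ₗ[ℝ] EuclideanSpace ℝ (Fin N)) = 1 :=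
    diagA_det N hN l hl
  change LinearMap.det (R • (diagA N l : EuclideanSpace ℝ (Fin N) →ₗ[ℝ] EuclideanSpace ℝ (Fin N))) = _
  rw [LinearMap.det_smul, hdet, finrank_euclideanSpace_fin, mul_one]

/-- For large volumes the ball is not a local minimizer. -/
theorem stmt16 (N : ℕ) (hN : 2 ≤ N) (s t : ℝ) (hs : 0 < s) (hst : s < t) (ht : t < 1) :
    ∃ m₂ : ℝ, 0 < m₂ ∧ ∀ m : ℝ, m₂ < m → ∀ δ : ℝ, 0 < δ →
      ∃ F : Set (EuclideanSpace ℝ (Fin N)), MeasurableSet F ∧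
        volume F = ENNReal.ofReal m ∧ fracPer N t F < ⊤ ∧
        volume (symmDiff F (Metric.ball (0 : EuclideanSpace ℝ (Fin N)) (ballRad N m))) <
          ENNReal.ofReal δ ∧
        freeEnergy N s t F <
          freeEnergy N s t (Metric.ball (0 : EuclideanSpace ℝ (Fin N)) (ballRad N m)) := by
  have : Nontrivial (EuclideanSpace ℝ (Fin N)) := by
    have : Nonempty (Fin N) := ⟨⟨0, by omega⟩⟩
    infer_instance
  obtain ⟨C, hC, hgap⟩ := sphere_gap N hN s t hs hst
  set e : EuclideanSpace ℝ (Fin N) := EuclideanSpace.single ⟨0, by omega⟩ 1 with he_def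
  have he : ‖e‖ = 1 := by simp [he_def]
  set Hs := (Hrad N s e).toReal with hHs
  set Ht := (Hrad N t e).toReal with hHt
  have hHspos : 0 < Hs := ENNReal.toReal_pos (Hrad_pos N s e he).ne'
    (Hrad_lt_top N hN s hs (hst.trans ht) e he).ne
  have hHtpos : 0 < Ht := ENNReal.toReal_pos (Hrad_pos N t e he).ne'
    (Hrad_lt_top N hN t (hs.trans hst) ht e he).ne
  set c := (volume (Metric.ball (0 : EuclideanSpace ℝ (Fin N)) 1)).toReal with hc
  have hcpos : 0 < c := ENNReal.toReal_pos (Metric.measure_ball_pos volume _ one_pos).ne'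
    measure_ball_lt_top.ne
  have hcv : volume (Metric.ball (0 : EuclideanSpace ℝ (Fin N)) 1) = ENNReal.ofReal c :=
    (ENNReal.ofReal_toReal measure_ball_lt_top.ne).symm
  have h1t : 0 < 1 - t := by linarith
  set K := (1 - t) * Ht * C / (s * Hs) with hK
  have hKpos : 0 < K := by positivity
  set R0 := K ^ (1 / (t - s)) with hR0
  have hR0pos : 0 < R0 := Real.rpow_pos_of_pos hKpos _
  refine ⟨c * R0 ^ N, by positivity, ?_⟩
  intro m hm δ hδ
  have hmpos : 0 < m := lt_trans (by positivity) hm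
  set R := ballRad N m with hR
  have hRpos : 0 < R := by
    rw [hR, ballRad]; exact Real.rpow_pos_of_pos (by positivity) _
  have hRN : R ^ N = m / c := by
    rw [hR, ballRad, ← hc, one_div, Real.rpow_inv_natCast_pow (by positivity) (by omega)]
  have hRR0 : R0 < R := by
    apply lt_of_pow_lt_pow_left₀ N hRpos.le
    rw [hRN, lt_div_iff₀ hcpos, mul_comm]
    exact hm
  have hRK : K < R ^ (t - s) := by
    have h1 : R0 ^ (t - s) = K := by
      rw [hR0, ← Real.rpow_mul hKpos.le, one_div, inv_mul_cancel₀ (by linarith), Real.rpow_one]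
    rw [← h1]
    exact Real.rpow_lt_rpow hR0pos.le hRR0 (by linarith)
  -- choice of l
  obtain ⟨l, hl1, hl2, hlδ⟩ : ∃ l : ℝ, 1 < l ∧ l ≤ 2 ∧
      (l * R) ^ N * c - (l⁻¹ * R) ^ N * c < δ := by
    have hcont : ContinuousAt (fun l : ℝ => (l * R) ^ N * c - (l⁻¹ * R) ^ N * c) 1 := by
      have : ContinuousAt (fun l : ℝ => l⁻¹) 1 := continuousAt_inv₀ one_ne_zero
      fun_prop
    have h1 : ∀ᶠ l in nhds (1:ℝ), (l * R) ^ N * c - (l⁻¹ * R) ^ N * c < δ := by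
      apply hcont.eventually_lt continuousAt_const
      simpa using hδ
    have h2 : ∀ᶠ l in nhdsWithin (1:ℝ) (Set.Ioi 1), l ∈ Set.Ioc (1:ℝ) 2 :=
      Ioc_mem_nhdsGT one_lt_two
    obtain ⟨l, hl, hl'⟩ := (h2.and (h1.filter_mono nhdsWithin_le_nhds)).exists
    exact ⟨l, hl.1, hl.2, hl'⟩
  have hl0 : 0 < l := by linarith
  obtain ⟨hg1, hg2⟩ := hgap l hl1 hl2
  have et := fracPer_eval N hN t (hs.trans hst) ht e he l hl1.le R hRpos
  have es := fracPer_eval N hN s hs (hst.trans ht) e he l hl1.le R hRpos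
  have et1 := fracPer_eval N hN t (hs.trans hst) ht e he 1 le_rfl R hRpos
  have es1 := fracPer_eval N hN s hs (hst.trans ht) e he 1 le_rfl R hRpos
  rw [image_one N hN R hRpos] at et1 es1
  have hvol : volume ((R • diagA N l) '' Metric.ball 0 1) = ENNReal.ofReal m := by
    have hd : LinearMap.det ((R • diagA N l : EuclideanSpace ℝ (Fin N) →L[ℝ] EuclideanSpace ℝ (Fin N)) :
        EuclideanSpace ℝ (Fin N) →ₗ[ℝ] EuclideanSpace ℝ (Fin N)) = R ^ N :=
      smul_diagA_det N hN l hl0 R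
    rw [Measure.addHaar_image_continuousLinearMap, hd,
      abs_of_pos (by positivity), hcv, ← ENNReal.ofReal_mul (by positivity), hRN,
      div_mul_cancel₀ _ hcpos.ne']
  refine ⟨(R • diagA N l) '' Metric.ball 0 1, ?_, hvol, et.1, ?_, ?_⟩
  · have : IsOpenMap (R • diagA N l) := by
      apply ContinuousLinearMap.isOpenMap
      intro y
      obtain ⟨x, hx⟩ := (diagA_bij N hN l hl0).2 (R⁻¹ • y)
      exact ⟨x, by rw [smul_apply, hx, smul_smul, mul_inv_cancel₀ hRpos.ne', one_smul]⟩
    exact (this _ Metric.isOpen_ball).measurableSet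
  · have hlinv : l⁻¹ ≤ 1 := inv_le_one_of_one_le₀ hl1.le
    have hsub : symmDiff ((R • diagA N l) '' Metric.ball 0 1)
        (Metric.ball (0 : EuclideanSpace ℝ (Fin N)) R) ⊆
        Metric.ball 0 (l * R) \ Metric.ball 0 (l⁻¹ * R) := by
      have hb1 : Metric.ball (0 : EuclideanSpace ℝ (Fin N)) R ⊆ Metric.ball 0 (l * R) :=
        Metric.ball_subset_ball (by nlinarith)
      have hb2 : Metric.ball (0 : EuclideanSpace ℝ (Fin N)) (l⁻¹ * R) ⊆ Metric.ball 0 R :=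
        Metric.ball_subset_ball (by nlinarith)
      rintro x (⟨h1, h2⟩ | ⟨h1, h2⟩)
      · exact ⟨image_sub N l hl1.le R hRpos h1, fun h => h2 (hb2 h)⟩
      · exact ⟨hb1 h1, fun h => h2 (sub_image N hN l hl1.le R hRpos h)⟩
    refine (measure_mono hsub).trans_lt ?_
    rw [measure_sdiff (Metric.ball_subset_ball (by nlinarith))
      measurableSet_ball.nullMeasurableSet measure_ball_lt_top.ne,
      Measure.addHaar_ball volume _ (by positivity : 0 ≤ l * R),
      Measure.addHaar_ball volume _ (by positivity : 0 ≤ l⁻¹ * R),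
      finrank_euclideanSpace_fin, hcv, ← ENNReal.ofReal_mul (by positivity),
      ← ENNReal.ofReal_mul (by positivity), ← ENNReal.ofReal_sub _ (by positivity)]
    exact (ENNReal.ofReal_lt_ofReal_iff hδ).mpr hlδ
  · unfold freeEnergy
    rw [et.2, es.2, et1.2, es1.2, ← hHs, ← hHt]
    have hsplit : R ^ ((N : ℝ) - s) = R ^ ((N : ℝ) - t) * R ^ (t - s) := by
      rw [← Real.rpow_add hRpos]; congr 1; ring
    have hRt : 0 < R ^ ((N : ℝ) - t) := Real.rpow_pos_of_pos hRpos _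
    rw [hsplit]
    have hKK : (1 - t) * Ht * C < R ^ (t - s) * (s * Hs) := by
      rwa [hK, div_lt_iff₀ (by positivity)] at hRK
    set Δs := Ssph N s l - Ssph N s 1 with hΔs
    set Δt := Ssph N t l - Ssph N t 1 with hΔt
    have h1 : R ^ ((N : ℝ) - t) * ((1 - t) * Ht) * Δt ≤
        R ^ ((N : ℝ) - t) * ((1 - t) * Ht) * (C * Δs) :=
      mul_le_mul_of_nonneg_left hg2 (by positivity)
    have h2 : R ^ ((N : ℝ) - t) * Δs * ((1 - t) * Ht * C) <
        R ^ ((N : ℝ) - t) * Δs * (R ^ (t - s) * (s * Hs)) :=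
      mul_lt_mul_of_pos_left hKK (by positivity)
    have e1 : Ssph N s l = Ssph N s 1 + Δs := by rw [hΔs]; ring
    have e2 : Ssph N t l = Ssph N t 1 + Δt := by rw [hΔt]; ring
    rw [e1, e2]
    linarith
end
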